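/- Let b ∈ ℝ, c < 0, m1 > 0 real, and q > 0 real be fixed, and consider the operator with potential v(x) = b·q^{m1}·cos 2x + c·q^{2m1}·cos 4x. Set B_m := (q^{m1·(2m−1)}·|c|^{m−1}·√(−2c) / (2^{3m−5}·((2m−3)!!)²·π))·|sin(bπ/(4√(−2c)))|. Then there exist constants C > 0 and a positive integer M such that for all integers m ≥ M, |γ_{2m−1} − B_m| ≤ C·B_m·(log m)/m. -/

import Mathlib

open Real

noncomputable section

/-- `f` is a (possibly zero) solution of `-f'' + v f = λ f` that is `π`-periodic. -/
def IsPerEF (v : ℝ → ℝ) (lam : ℝ) (f : ℝ → ℝ) : Prop :=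
  ContDiff ℝ 2 f ∧ (∀ x, -(deriv (deriv f) x) + v x * f x = lam * f x) ∧
    ∀ x, f (x + Real.pi) = f x

/-- `f` is a (possibly zero) solution of `-f'' + v f = λ f` with `f(x+π) = -f(x)`. -/
def IsSemiEF (v : ℝ → ℝ) (lam : ℝ) (f : ℝ → ℝ) : Prop :=
  ContDiff ℝ 2 f ∧ (∀ x, -(deriv (deriv f) x) + v x * f x = lam * f x) ∧
    ∀ x, f (x + Real.pi) = -f x

/-- Multiplicity of `λ` as a periodic eigenvalue: the dimension of the space of
π-periodic solutions. -/
def perMult (v : ℝ → ℝ) (lam : ℝ) : ℕ :=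
  Module.finrank ℝ (Submodule.span ℝ {f : ℝ → ℝ | IsPerEF v lam f})

/-- Multiplicity of `λ` as a semi-periodic eigenvalue. -/
def semiMult (v : ℝ → ℝ) (lam : ℝ) : ℕ :=
  Module.finrank ℝ (Submodule.span ℝ {f : ℝ → ℝ | IsSemiEF v lam f})

/-- `lamP` enumerates the periodic eigenvalues of `-D² + v` in nondecreasing order
with multiplicity (indices `0, 1, 2, …`). -/
def EnumPer (v : ℝ → ℝ) (lamP : ℕ → ℝ) : Prop :=
  Monotone lamP ∧ (∀ n, ∃ f, f ≠ 0 ∧ IsPerEF v (lamP n) f) ∧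
    ∀ lam : ℝ, Nat.card {n : ℕ // lamP n = lam} = perMult v lam

/-- `lamM` enumerates the semi-periodic eigenvalues of `-D² + v` in nondecreasing order
with multiplicity (indices `1, 2, 3, …`). -/
def EnumSemi (v : ℝ → ℝ) (lamM : ℕ → ℝ) : Prop :=
  MonotoneOn lamM {n : ℕ | 1 ≤ n} ∧ (∀ n, 1 ≤ n → ∃ f, f ≠ 0 ∧ IsSemiEF v (lamM n) f) ∧
    ∀ lam : ℝ, Nat.card {n : ℕ // 1 ≤ n ∧ lamM n = lam} = semiMult v lam

/-- The length of the `n`-th instability interval: `λ_{n+1}^- - λ_n^-` for odd `n`,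
`λ_n^+ - λ_{n-1}^+` for even `n`. -/
def gapLen (lamP lamM : ℕ → ℝ) (n : ℕ) : ℝ :=
  if Odd n then lamM (n + 1) - lamM n else lamP n - lamP (n - 1)

/-!
With `s = √(-2c)`, `α = q ^ m1 * s / 2` and `t = -b / (2s)` the potential is
`-4αt cos 2x - 2α² cos 4x`. It is even, so every antiperiodic eigenfunction splits into one that is
even about `0` and odd about `π/2`, and one that is a translate by `π/2` of such a function for the
potential with `-t` in place of `t`. Up to finitely many indices the `(2K+1)`-st gap is therefore
`|e K - o K|`, where `e` and `o` are the simple Neumann-Dirichlet spectra on `[0, π/2]` for `t` and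
`-t`.

After multiplication by `exp (-α cos 2x)` the cosine coefficients `g`, `g'` of the two families of
eigenfunctions satisfy three-term recurrences that are adjoint to each other for the alternating
pairing `∑ (-1)ᵏ g k g' k`. Summation by parts gives
`(e K - o K) ∑ (-1)ᵏ g k g' k = -4αt g 0 g' 0`, and the pairing is `(-1)ᴷ + O(1/K)`. Iterating the
recurrence from the diagonal coefficient, which tends to a Bessel value, down to index `0` gives
`g 0` up to a factor `1 + O(log K / K)`: it is a quotient of products, and in `g 0 g' 0` the
numerators combine to `∏ (1 - (t/2)²/i²)`, Euler's product for the sine.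
-/

namespace WhittakerHill

/-! ### Ordinary differential equations -/

theorem exists_hasDerivAt_Ioo_of_lipschitzWith_of_bounded {E : Type*} [NormedAddCommGroup E]
    [NormedSpace ℝ E] [CompleteSpace E] {F : ℝ → E → E} {K L : NNReal}
    (hlip : ∀ t, LipschitzWith K (F t)) (hcont : ∀ x, Continuous fun t => F t x)
    (hbound : ∀ t x, ‖F t x‖ ≤ L) (x₀ : E) (R : NNReal) :
    ∃ γ : ℝ → E, γ 0 = x₀ ∧ ∀ t ∈ Set.Ioo (-(R : ℝ)) R, HasDerivAt γ (F t (γ t)) t := by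
  have hR := R.coe_nonneg
  have hPL : IsPicardLindelof F (⟨0, by linarith, hR⟩ : Set.Icc (-(R : ℝ)) R) x₀ (L * R) 0 L K :=
    { lipschitzOnWith := fun t _ => (hlip t).lipschitzOnWith
      continuousOn := fun x _ => (hcont x).continuousOn
      norm_le := fun t _ x _ => hbound t x
      mul_max_le := by simp }
  obtain ⟨γ, h0, hγ⟩ := hPL.exists_eq_forall_mem_Icc_hasDerivWithinAt₀
  exact ⟨γ, h0, fun t ht =>
    (hγ t (Set.Ioo_subset_Icc_self ht)).hasDerivAt (Icc_mem_nhds ht.1 ht.2)⟩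

theorem exists_forall_hasDerivAt_of_lipschitzWith_of_bounded {E : Type*} [NormedAddCommGroup E]
    [NormedSpace ℝ E] [CompleteSpace E] {F : ℝ → E → E} {K L : NNReal}
    (hlip : ∀ t, LipschitzWith K (F t)) (hcont : ∀ x, Continuous fun t => F t x)
    (hbound : ∀ t x, ‖F t x‖ ≤ L) (x₀ : E) :
    ∃ γ : ℝ → E, γ 0 = x₀ ∧ ∀ t, HasDerivAt γ (F t (γ t)) t := by
  choose γ hγ₀ hγ using fun n : ℕ =>
    exists_hasDerivAt_Ioo_of_lipschitzWith_of_bounded hlip hcont hbound x₀ (n + 1)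
  push_cast at hγ
  have hagree : ∀ m n : ℕ, m ≤ n → Set.EqOn (γ n) (γ m) (Set.Ioo (-((m : ℝ) + 1)) (m + 1)) := by
    intro m n hmn
    have hmn' : (m : ℝ) ≤ n := by exact_mod_cast hmn
    refine ODE_solution_unique_of_mem_Ioo (v := F) (s := fun _ => Set.univ) (K := K) (t₀ := 0)
      (fun t _ => (hlip t).lipschitzOnWith) ⟨by linarith [m.cast_nonneg (α := ℝ)], by positivity⟩
      (fun t ht => ⟨hγ n t ⟨?_, ?_⟩, trivial⟩) (fun t ht => ⟨hγ m t ht, trivial⟩)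
      (by rw [hγ₀, hγ₀]) <;> linarith [ht.1, ht.2]
  refine ⟨fun t => γ ⌈|t|⌉₊ t, hγ₀ _, fun t => ?_⟩
  have ht : |t| < ⌈|t|⌉₊ + 1 := by linarith [Nat.le_ceil |t|]
  refine (hγ ⌈|t|⌉₊ t (abs_lt.mp ht)).congr_of_eventuallyEq ?_
  filter_upwards [Ioo_mem_nhds (abs_lt.mp ht).1 (abs_lt.mp ht).2] with s hs
  rcases le_total ⌈|t|⌉₊ ⌈|s|⌉₊ with h | h
  · exact hagree _ _ h hs
  · exact (hagree _ _ h (abs_lt.mp (by linarith [Nat.le_ceil |s|]))).symm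

theorem lt_of_hasDerivAt_lt_of_eq {f g f' g' : ℝ → ℝ} {a b : ℝ} (hf : ∀ x, HasDerivAt f (f' x) x)
    (hg : ∀ x, HasDerivAt g (g' x) x) (ha : f a ≤ g a) (h : ∀ x, f x = g x → f' x < g' x)
    (hab : a < b) : f b < g b := by
  have hle : ∀ ⦃x⦄, x ∈ Set.Icc a b → f x ≤ g x :=
    image_le_of_deriv_right_lt_deriv_boundary
      (fun x _ => (hf x).continuousAt.continuousWithinAt)
      (fun x _ => (hf x).hasDerivWithinAt) ha hg (fun x _ => h x)
  refine (hle (Set.right_mem_Icc.mpr hab.le)).lt_of_ne fun heq => ?_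
  have hslope := (hasDerivWithinAt_iff_tendsto_slope' (s := Set.Iio b) (by simp)).mp
    ((hg b).sub (hf b)).hasDerivWithinAt
  have hderiv : g' b - f' b ≤ 0 := by
    refine le_of_tendsto hslope ?_
    filter_upwards [Ioo_mem_nhdsLT hab] with x hx
    rw [slope_def_field]
    refine div_nonpos_of_nonneg_of_nonpos ?_ (by linarith [hx.2])
    simpa [heq] using hle ⟨hx.1.le, hx.2.le⟩
  linarith [h b heq]

theorem abs_exp_sub_one_le_mul_exp_abs (x : ℝ) : |exp x - 1| ≤ |x| * exp |x| := by
  rcases le_total 0 x with hx | hx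
  · rw [abs_of_nonneg hx, abs_of_nonneg (by simpa using hx)]
    have hexp : exp x * exp (-x) = 1 := by rw [← exp_add, add_neg_cancel, exp_zero]
    nlinarith [exp_pos x, add_one_le_exp (-x)]
  · rw [abs_of_nonpos hx, abs_of_nonpos (by simpa using hx)]
    nlinarith [add_one_le_exp x, one_le_exp (neg_nonneg.mpr hx)]

/-- `z` solves `-z'' + v z = λ z` on `ℝ`, with `z'` its derivative; working with pairs avoids
`deriv` and turns initial conditions into statements about `z` and `z'`. -/
structure IsHillSol (v : ℝ → ℝ) (lam : ℝ) (z z' : ℝ → ℝ) : Prop where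
  hasDerivAt : ∀ x, HasDerivAt z (z' x) x
  hasDerivAt_deriv : ∀ x, HasDerivAt z' ((v x - lam) * z x) x

namespace IsHillSol

variable {v z z' u u' : ℝ → ℝ} {lam V : ℝ}

theorem add (hz : IsHillSol v lam z z') (hu : IsHillSol v lam u u') :
    IsHillSol v lam (z + u) (z' + u') where
  hasDerivAt x := (hz.hasDerivAt x).add (hu.hasDerivAt x)
  hasDerivAt_deriv x :=
    ((hz.hasDerivAt_deriv x).add (hu.hasDerivAt_deriv x)).congr_deriv
      (by simp only [Pi.add_apply]; ring)

theorem const_smul (hz : IsHillSol v lam z z') (a : ℝ) : IsHillSol v lam (a • z) (a • z') where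
  hasDerivAt x := (hz.hasDerivAt x).const_smul a
  hasDerivAt_deriv x :=
    ((hz.hasDerivAt_deriv x).const_smul a).congr_deriv
      (by simp only [Pi.smul_apply, smul_eq_mul]; ring)

theorem comp_const_sub (hz : IsHillSol v lam z z') {a : ℝ} (hv : ∀ x, v (a - x) = v x) :
    IsHillSol v lam (fun x => z (a - x)) (fun x => -z' (a - x)) where
  hasDerivAt x := (hz.hasDerivAt (a - x)).comp_const_sub a x
  hasDerivAt_deriv x :=
    ((hz.hasDerivAt_deriv (a - x)).comp_const_sub a x).neg.congr_deriv (by rw [hv, neg_neg])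

theorem continuous (hz : IsHillSol v lam z z') : Continuous z :=
  continuous_iff_continuousAt.mpr fun x => (hz.hasDerivAt x).continuousAt

theorem continuous_deriv (hz : IsHillSol v lam z z') : Continuous z' :=
  continuous_iff_continuousAt.mpr fun x => (hz.hasDerivAt_deriv x).continuousAt

theorem eq_of_eq_at (hv : ∀ x, |v x| ≤ V) (hz : IsHillSol v lam z z') (hu : IsHillSol v lam u u')
    {x₀ : ℝ} (h : z x₀ = u x₀) (h' : z' x₀ = u' x₀) : z = u := by
  have hV : 0 ≤ V := (abs_nonneg _).trans (hv 0)
  set Q : NNReal := ⟨V + |lam|, by positivity⟩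
  have hlip : ∀ t, LipschitzWith (max 1 Q) fun p : ℝ × ℝ => (p.2, (v t - lam) * p.1) := by
    intro t
    have hfst : LipschitzWith Q fun p : ℝ × ℝ => (v t - lam) * p.1 := by
      refine ((lipschitzWith_smul (v t - lam)).comp LipschitzWith.prod_fst).weaken ?_
      rw [mul_one, ← NNReal.coe_le_coe]
      exact (abs_sub _ _).trans (add_le_add_left (hv t) _)
    exact LipschitzWith.prod_snd.prodMk hfst
  have hpair := ODE_solution_unique_univ (v := fun x (p : ℝ × ℝ) => (p.2, (v x - lam) * p.1))
    (s := fun _ => Set.univ) (f := fun x => (z x, z' x)) (g := fun x => (u x, u' x)) (t₀ := x₀)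
    (fun t => (hlip t).lipschitzOnWith)
    (fun t => ⟨(hz.hasDerivAt t).prodMk (hz.hasDerivAt_deriv t), trivial⟩)
    (fun t => ⟨(hu.hasDerivAt t).prodMk (hu.hasDerivAt_deriv t), trivial⟩) (by simp [h, h'])
  exact funext fun x => congrArg Prod.fst (congrFun hpair x)

end IsHillSol

/-- Solutions of the mixed problem on `[0, π/2]`, Neumann at `0` and Dirichlet at `π/2`. For `v`
even and `π`-periodic these are exactly the even semi-periodic solutions. -/
structure IsMixedSol (v : ℝ → ℝ) (lam : ℝ) (z z' : ℝ → ℝ) : Prop extends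
    IsHillSol v lam z z' where
  deriv_zero : z' 0 = 0
  pi_div_two : z (π / 2) = 0

/-- `θ` is the Prüfer angle of the solution of `-z'' + w z = ω² z` with `z(0) = 1`, `z'(0) = 0`,
in the normalisation `z = r sin θ`, `z' = ω r cos θ`. -/
structure IsPruferAngle (w : ℝ → ℝ) (ω : ℝ) (θ : ℝ → ℝ) : Prop where
  zero : θ 0 = π / 2
  hasDerivAt : ∀ x, HasDerivAt θ (ω - w x * sin (θ x) ^ 2 / ω) x

/-- The Prüfer radius `r` belonging to the angle `θ`, with `r(0) = 1`. -/
def pruferRadius (w : ℝ → ℝ) (ω : ℝ) (θ : ℝ → ℝ) (x : ℝ) : ℝ :=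
  exp (∫ s in (0 : ℝ)..x, w s / ω * sin (θ s) * cos (θ s))

section PruferField

variable {w : ℝ → ℝ} {M ω : ℝ}

theorem mul_sin_sq_mem_Icc (hw₀ : ∀ x, 0 ≤ w x) (hwM : ∀ x, w x ≤ M) (x θ : ℝ) :
    w x * sin θ ^ 2 ∈ Set.Icc 0 M :=
  ⟨mul_nonneg (hw₀ x) (sq_nonneg _),
    (mul_le_of_le_one_right (hw₀ x) (sin_sq_le_one θ)).trans (hwM x)⟩

theorem lipschitzWith_pruferField (hw₀ : ∀ x, 0 ≤ w x) (hwM : ∀ x, w x ≤ M) (hω : 0 < ω) (x : ℝ) :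
    LipschitzWith (2 * M / ω).toNNReal fun θ => ω - w x * sin θ ^ 2 / ω := by
  refine LipschitzWith.of_dist_le' fun p q => ?_
  have hsin : |sin q + sin p| ≤ 2 :=
    (abs_add_le _ _).trans (by linarith [abs_sin_le_one p, abs_sin_le_one q])
  calc |ω - w x * sin p ^ 2 / ω - (ω - w x * sin q ^ 2 / ω)|
      = |w x / ω * ((sin q - sin p) * (sin q + sin p))| := by congr 1; ring
    _ = w x / ω * (|sin p - sin q| * |sin q + sin p|) := by
        rw [abs_mul, abs_mul, abs_sub_comm (sin q), abs_of_nonneg (div_nonneg (hw₀ x) hω.le)]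
    _ ≤ M / ω * (|p - q| * 2) := by
        have hM : 0 ≤ M := (hw₀ x).trans (hwM x)
        exact mul_le_mul (div_le_div_of_nonneg_right (hwM x) hω.le)
          (mul_le_mul (abs_sin_sub_sin_le p q) hsin (abs_nonneg _) (abs_nonneg _))
          (by positivity) (by positivity)
    _ = 2 * M / ω * |p - q| := by ring

theorem exists_isPruferAngle (hw : Continuous w) (hw₀ : ∀ x, 0 ≤ w x) (hwM : ∀ x, w x ≤ M)
    (hω : 0 < ω) : ∃ θ, IsPruferAngle w ω θ := by
  have hM : 0 ≤ M := (hw₀ 0).trans (hwM 0)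
  have hbound : ∀ x θ, ‖ω - w x * sin θ ^ 2 / ω‖ ≤ ω + M / ω := by
    intro x θ
    obtain ⟨hl, hu⟩ := mul_sin_sq_mem_Icc hw₀ hwM x θ
    refine (norm_sub_le _ _).trans ?_
    rw [norm_of_nonneg hω.le, norm_of_nonneg (by positivity)]
    exact add_le_add_right (div_le_div_of_nonneg_right hu hω.le) ω
  obtain ⟨θ, h0, hθ⟩ := exists_forall_hasDerivAt_of_lipschitzWith_of_bounded
    (L := ⟨ω + M / ω, by positivity⟩) (lipschitzWith_pruferField hw₀ hwM hω)
    (fun θ => by fun_prop) hbound (π / 2)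
  exact ⟨θ, h0, hθ⟩

end PruferField

namespace IsPruferAngle

variable {w θ θ' : ℝ → ℝ} {M ω ω' x : ℝ}

theorem continuous (h : IsPruferAngle w ω θ) : Continuous θ :=
  continuous_iff_continuousAt.mpr fun x => (h.hasDerivAt x).continuousAt

theorem isHillSol (hw : Continuous w) (hω : 0 < ω) (h : IsPruferAngle w ω θ) :
    IsHillSol w (ω ^ 2) (fun x => pruferRadius w ω θ x * sin (θ x))
      (fun x => ω * (pruferRadius w ω θ x * cos (θ x))) := by
  have hcont : Continuous fun s => w s / ω * sin (θ s) * cos (θ s) := by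
    have := h.continuous
    fun_prop
  have hr : ∀ x, HasDerivAt (pruferRadius w ω θ)
      (pruferRadius w ω θ x * (w x / ω * sin (θ x) * cos (θ x))) x := fun x =>
    (hcont.integral_hasStrictDerivAt 0 x).hasDerivAt.exp
  refine ⟨fun x => ?_, fun x => ?_⟩
  · refine ((hr x).mul (h.hasDerivAt x).sin).congr_deriv ?_
    field_simp
    ring
  · refine (((hr x).mul (h.hasDerivAt x).cos).const_mul ω).congr_deriv ?_
    field_simp
    linear_combination w x * pruferRadius w ω θ x * sin (θ x) * sin_sq_add_cos_sq (θ x)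

theorem monotone_sub_mul (hw₀ : ∀ x, 0 ≤ w x) (hwM : ∀ x, w x ≤ M) (hω : 0 < ω)
    (h : IsPruferAngle w ω θ) : Monotone fun x => θ x - (ω - M / ω) * x := by
  refine monotone_of_hasDerivAt_nonneg
    (fun x => (h.hasDerivAt x).sub ((hasDerivAt_id x).const_mul _)) fun x => ?_
  have := div_le_div_of_nonneg_right (mul_sin_sq_mem_Icc hw₀ hwM x (θ x)).2 hω.le
  simp only [Pi.zero_apply]
  linarith

theorem antitone_sub_mul (hw₀ : ∀ x, 0 ≤ w x) (hω : 0 < ω) (h : IsPruferAngle w ω θ) :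
    Antitone fun x => θ x - ω * x := by
  refine antitone_of_hasDerivAt_nonpos
    (fun x => (h.hasDerivAt x).sub ((hasDerivAt_id x).const_mul _)) fun x => ?_
  have := div_nonneg (mul_nonneg (hw₀ x) (sq_nonneg (sin (θ x)))) hω.le
  simp only [Pi.zero_apply]
  linarith

theorem le_add_mul (hw₀ : ∀ x, 0 ≤ w x) (hω : 0 < ω) (h : IsPruferAngle w ω θ) (hx : 0 ≤ x) :
    θ x ≤ π / 2 + ω * x := by
  have := h.antitone_sub_mul hw₀ hω hx
  simp only [h.zero, mul_zero, sub_zero] at this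
  linarith

theorem add_mul_le (hw₀ : ∀ x, 0 ≤ w x) (hwM : ∀ x, w x ≤ M) (hω : 0 < ω)
    (h : IsPruferAngle w ω θ) (hx : 0 ≤ x) : π / 2 + (ω - M / ω) * x ≤ θ x := by
  have := h.monotone_sub_mul hw₀ hwM hω hx
  simp only [h.zero, mul_zero, sub_zero] at this
  linarith

theorem pos (hω : 0 < ω) (h : IsPruferAngle w ω θ) (hx : 0 < x) : 0 < θ x :=
  lt_of_hasDerivAt_lt_of_eq (fun y => hasDerivAt_const y 0) h.hasDerivAt
    (by rw [h.zero]; positivity) (fun y hy => by simp [← hy, hω]) hx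

theorem lt_of_lt (hw₀ : ∀ x, 0 ≤ w x) (hω : 0 < ω) (hlt : ω < ω') (h : IsPruferAngle w ω θ)
    (h' : IsPruferAngle w ω' θ') (hx : 0 < x) : θ x < θ' x := by
  refine lt_of_hasDerivAt_lt_of_eq h.hasDerivAt h'.hasDerivAt (by rw [h.zero, h'.zero])
    (fun y hy => ?_) hx
  rw [hy]
  have hterm := mul_nonneg (hw₀ y) (sq_nonneg (sin (θ' y)))
  linarith [div_le_div_of_nonneg_left hterm hω hlt.le]

theorem dist_le_gronwallBound (hw₀ : ∀ x, 0 ≤ w x) (hwM : ∀ x, w x ≤ M) (hω : 0 < ω)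
    (h : IsPruferAngle w ω θ) (h' : IsPruferAngle w ω' θ') (hx : 0 ≤ x) :
    dist (θ' x) (θ x) ≤
      gronwallBound 0 (2 * M / ω).toNNReal (0 + (|ω' - ω| + M * |1 / ω' - 1 / ω|)) (x - 0) := by
  rw [dist_comm]
  refine dist_le_of_approx_trajectories_ODE (v := fun t θ => ω - w t * sin θ ^ 2 / ω)
    (lipschitzWith_pruferField hw₀ hwM hω) h.continuous.continuousOn
    (fun t _ => (h.hasDerivAt t).hasDerivWithinAt) (fun t _ => (dist_self _).le)
    h'.continuous.continuousOn (fun t _ => (h'.hasDerivAt t).hasDerivWithinAt) (fun t _ => ?_)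
    (by rw [h.zero, h'.zero, dist_self]) x ⟨hx, le_rfl⟩
  obtain ⟨hl, hu⟩ := mul_sin_sq_mem_Icc hw₀ hwM t (θ' t)
  calc |ω' - w t * sin (θ' t) ^ 2 / ω' - (ω - w t * sin (θ' t) ^ 2 / ω)|
      = |(ω' - ω) - w t * sin (θ' t) ^ 2 * (1 / ω' - 1 / ω)| := by congr 1; ring
    _ ≤ |ω' - ω| + w t * sin (θ' t) ^ 2 * |1 / ω' - 1 / ω| := by
        refine (abs_sub _ _).trans_eq ?_
        rw [abs_mul (w t * _), abs_of_nonneg hl]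
    _ ≤ |ω' - ω| + M * |1 / ω' - 1 / ω| := by gcongr

theorem continuousOn_of_forall {Θ : ℝ → ℝ → ℝ} (hw₀ : ∀ x, 0 ≤ w x) (hwM : ∀ x, w x ≤ M)
    (hΘ : ∀ ω, 0 < ω → IsPruferAngle w ω (Θ ω)) (hx : 0 ≤ x) :
    ContinuousOn (fun ω => Θ ω x) (Set.Ioi 0) := by
  refine fun ω (hω : 0 < ω) => ContinuousAt.continuousWithinAt ?_
  rw [ContinuousAt, tendsto_iff_dist_tendsto_zero]
  have hε : Filter.Tendsto (fun η => 0 + (|η - ω| + M * |1 / η - 1 / ω|)) (nhds ω) (nhds 0) := by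
    have hinv : ContinuousAt (fun η : ℝ => 1 / η) ω := by simpa using continuousAt_inv₀ hω.ne'
    have hcont : ContinuousAt (fun η => 0 + (|η - ω| + M * |1 / η - 1 / ω|)) ω := by fun_prop
    simpa using hcont.tendsto
  have hgronwall := (gronwallBound_continuous_ε 0 (2 * M / ω).toNNReal (x - 0)).tendsto 0
  rw [gronwallBound_ε0_δ0] at hgronwall
  refine squeeze_zero' (Filter.Eventually.of_forall fun _ => dist_nonneg) ?_ (hgronwall.comp hε)
  filter_upwards [Ioi_mem_nhds hω] with η hη
  exact (hΘ ω hω).dist_le_gronwallBound hw₀ hwM hω (hΘ η hη) hx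

theorem strictMonoOn_of_forall {Θ : ℝ → ℝ → ℝ} (hw₀ : ∀ x, 0 ≤ w x)
    (hΘ : ∀ ω, 0 < ω → IsPruferAngle w ω (Θ ω)) (hx : 0 < x) :
    StrictMonoOn (fun ω => Θ ω x) (Set.Ioi 0) := fun ω hω ω' hω' hlt =>
  (hΘ ω hω).lt_of_lt hw₀ hω hlt (hΘ ω' hω') hx

theorem exists_pi_div_two_eq {Θ : ℝ → ℝ → ℝ} (hw₀ : ∀ x, 0 ≤ w x) (hwM : ∀ x, w x ≤ M)
    (hΘ : ∀ ω, 0 < ω → IsPruferAngle w ω (Θ ω)) (k : ℕ) :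
    ∃ ω > 0, Θ ω (π / 2) = π * (k + 1) := by
  have hM : 0 ≤ M := (hw₀ 0).trans (hwM 0)
  have hb : 0 < 2 * k + 2 + M := by positivity
  have hcont : ContinuousOn (fun ω => Θ ω (π / 2)) (Set.Icc 1 (2 * k + 2 + M)) :=
    (continuousOn_of_forall hw₀ hwM hΘ (by positivity)).mono fun ω hω => one_pos.trans_le hω.1
  have hlow : Θ 1 (π / 2) ≤ π * (k + 1) := by
    have := (hΘ 1 one_pos).le_add_mul hw₀ one_pos pi_div_two_pos.le
    nlinarith [pi_pos, k.cast_nonneg (α := ℝ)]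
  have hhigh : π * (k + 1) ≤ Θ (2 * k + 2 + M) (π / 2) := by
    have := (hΘ _ hb).add_mul_le hw₀ hwM hb pi_div_two_pos.le
    have hdiv : M / (2 * k + 2 + M) ≤ 1 := by
      rw [div_le_one hb]
      linarith [k.cast_nonneg (α := ℝ)]
    nlinarith [pi_pos]
  obtain ⟨ω, hω, hωk⟩ := intermediate_value_Icc (by linarith [k.cast_nonneg (α := ℝ)]) hcont
    ⟨hlow, hhigh⟩
  exact ⟨ω, one_pos.trans_le hω.1, hωk⟩

theorem frequency_mem_Icc (hw₀ : ∀ x, 0 ≤ w x) (hwM : ∀ x, w x ≤ M) (hω : 0 < ω)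
    (h : IsPruferAngle w ω θ) {k : ℕ} (hk : θ (π / 2) = π * (k + 1)) :
    ω ∈ Set.Icc (2 * k + 1 : ℝ) (2 * k + 1 + M / (2 * k + 1)) := by
  have hupper := h.le_add_mul hw₀ hω pi_div_two_pos.le
  have hlower := h.add_mul_le hw₀ hwM hω pi_div_two_pos.le
  rw [hk] at hupper hlower
  have hωk : 2 * k + 1 ≤ ω := le_of_mul_le_mul_left (by linarith) pi_pos
  have hωk' : ω - M / ω ≤ 2 * k + 1 := le_of_mul_le_mul_left (by linarith) pi_pos
  have : M / ω ≤ M / (2 * k + 1) :=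
    div_le_div_of_nonneg_left ((hw₀ 0).trans (hwM 0)) (by positivity) hωk
  exact ⟨hωk, by linarith⟩

theorem isMixedSol (hw : Continuous w) (hω : 0 < ω) (h : IsPruferAngle w ω θ) {k : ℕ}
    (hk : θ (π / 2) = π * (k + 1)) :
    IsMixedSol w (ω ^ 2) (fun x => pruferRadius w ω θ x * sin (θ x))
      (fun x => ω * (pruferRadius w ω θ x * cos (θ x))) where
  toIsHillSol := h.isHillSol hw hω
  deriv_zero := by simp [h.zero]
  pi_div_two := by
    have := sin_nat_mul_pi (k + 1)
    push_cast at this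
    simp only [hk, mul_comm π, this, mul_zero]

theorem abs_pruferRadius_sub_one_le (hw₀ : ∀ x, 0 ≤ w x) (hwM : ∀ x, w x ≤ M)
    {N : ℝ} (hN : 1 ≤ N) (hNω : N ≤ ω) (hx₀ : 0 ≤ x) (hx : x ≤ π / 2) :
    |pruferRadius w ω θ x - 1| ≤ 2 * M * exp (2 * M) / N := by
  have hM : 0 ≤ M := (hw₀ 0).trans (hwM 0)
  have hN₀ : 0 < N := one_pos.trans_le hN
  have hintegrand : ∀ s, |w s / ω * sin (θ s) * cos (θ s)| ≤ M / N := by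
    intro s
    rw [abs_mul, abs_mul, abs_of_nonneg (div_nonneg (hw₀ s) (hN₀.le.trans hNω))]
    have hwN : w s / ω ≤ M / N := by
      gcongr
      exact hwM s
    calc w s / ω * |sin (θ s)| * |cos (θ s)| ≤ M / N * 1 * 1 := by
          gcongr
          exacts [abs_sin_le_one _, abs_cos_le_one _]
      _ = M / N := by ring
  have hint : |∫ s in (0 : ℝ)..x, w s / ω * sin (θ s) * cos (θ s)| ≤ 2 * M / N := by
    have := intervalIntegral.norm_integral_le_of_norm_le_const (a := 0) (b := x)
      (f := fun s => w s / ω * sin (θ s) * cos (θ s)) (C := M / N) fun s _ => hintegrand s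
    refine this.trans ?_
    rw [sub_zero, abs_of_nonneg hx₀, mul_comm 2 M, mul_div_right_comm]
    gcongr
    linarith [pi_le_four]
  calc |pruferRadius w ω θ x - 1| ≤ 2 * M / N * exp (2 * M / N) :=
        (abs_exp_sub_one_le_mul_exp_abs _).trans (by gcongr)
    _ ≤ 2 * M / N * exp (2 * M) := by
        gcongr
        exact div_le_self (by positivity) hN
    _ = 2 * M * exp (2 * M) / N := by ring

theorem abs_sin_sub_cos_le (hw₀ : ∀ x, 0 ≤ w x) (hwM : ∀ x, w x ≤ M) (hω : 0 < ω)
    (h : IsPruferAngle w ω θ) {k : ℕ} (hk : θ (π / 2) = π * (k + 1)) (hx₀ : 0 ≤ x)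
    (hx : x ≤ π / 2) : |sin (θ x) - cos ((2 * k + 1) * x)| ≤ 4 * M / (2 * k + 1) := by
  have hM : 0 ≤ M := (hw₀ 0).trans (hwM 0)
  obtain ⟨hωk, hωk'⟩ := h.frequency_mem_Icc hw₀ hwM hω hk
  have hupper := h.le_add_mul hw₀ hω hx₀
  have hlower := h.add_mul_le hw₀ hwM hω hx₀
  have hx2 : x ≤ 2 := by linarith [pi_le_four]
  have hδ : 0 ≤ M / (2 * k + 1) := by positivity
  have hMω : M / ω ≤ M / (2 * k + 1) := by gcongr
  rw [← sin_add_pi_div_two, mul_div_assoc]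
  refine (abs_sin_sub_sin_le _ _).trans (abs_le.mpr ⟨?_, ?_⟩)
  · nlinarith [mul_nonneg (sub_nonneg.mpr hωk) hx₀, mul_le_mul_of_nonneg_right hMω hx₀,
      mul_le_mul_of_nonneg_left hx2 hδ]
  · nlinarith [mul_le_mul_of_nonneg_right hωk' hx₀, mul_le_mul_of_nonneg_left hx2 hδ]

theorem abs_mul_sin_sub_cos_le (hw₀ : ∀ x, 0 ≤ w x) (hwM : ∀ x, w x ≤ M) (hω : 0 < ω)
    (h : IsPruferAngle w ω θ) {k : ℕ} (hk : θ (π / 2) = π * (k + 1)) (hx₀ : 0 ≤ x)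
    (hx : x ≤ π / 2) :
    |pruferRadius w ω θ x * sin (θ x) - cos ((2 * k + 1) * x)| ≤
      (2 * M * exp (2 * M) + 4 * M) / (2 * k + 1) := by
  have hr := abs_pruferRadius_sub_one_le (θ := θ) hw₀ hwM
    (by linarith [k.cast_nonneg (α := ℝ)]) (h.frequency_mem_Icc hw₀ hwM hω hk).1 hx₀ hx
  have hsin := h.abs_sin_sub_cos_le hw₀ hwM hω hk hx₀ hx
  calc |pruferRadius w ω θ x * sin (θ x) - cos ((2 * k + 1) * x)|
      = |(pruferRadius w ω θ x - 1) * sin (θ x) + (sin (θ x) - cos ((2 * k + 1) * x))| := by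
        congr 1; ring
    _ ≤ |pruferRadius w ω θ x - 1| * 1 + |sin (θ x) - cos ((2 * k + 1) * x)| := by
        refine (abs_add_le _ _).trans (add_le_add_left ?_ _)
        rw [abs_mul]
        gcongr
        exact abs_sin_le_one _
    _ ≤ _ := by rw [mul_one, add_div]; exact add_le_add hr hsin

theorem exists_nat_pi_div_two_eq (hω : 0 < ω) (h : IsPruferAngle w ω θ)
    (hsin : sin (θ (π / 2)) = 0) : ∃ k : ℕ, θ (π / 2) = π * (k + 1) := by
  obtain ⟨n, hn⟩ := sin_eq_zero_iff.mp hsin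
  have hpos := h.pos hω pi_div_two_pos
  rw [← hn] at hpos
  have hn₀ : 0 < n := by exact_mod_cast pos_of_mul_pos_left hpos pi_pos.le
  obtain ⟨k, rfl⟩ : ∃ k : ℕ, n = k + 1 := ⟨(n - 1).toNat, by omega⟩
  exact ⟨k, by rw [← hn]; push_cast; ring⟩

end IsPruferAngle

namespace IsMixedSol

variable {v w z z' u u' : ℝ → ℝ} {lam V M : ℝ}

theorem add (hz : IsMixedSol v lam z z') (hu : IsMixedSol v lam u u') :
    IsMixedSol v lam (z + u) (z' + u') where
  toIsHillSol := hz.toIsHillSol.add hu.toIsHillSol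
  deriv_zero := by simp [hz.deriv_zero, hu.deriv_zero]
  pi_div_two := by simp [hz.pi_div_two, hu.pi_div_two]

theorem const_smul (hz : IsMixedSol v lam z z') (a : ℝ) : IsMixedSol v lam (a • z) (a • z') where
  toIsHillSol := hz.toIsHillSol.const_smul a
  deriv_zero := by simp [hz.deriv_zero]
  pi_div_two := by simp [hz.pi_div_two]

theorem sub_const (hz : IsMixedSol v lam z z') (A : ℝ) :
    IsMixedSol (fun x => v x - A) (lam - A) z z' where
  hasDerivAt := hz.hasDerivAt
  hasDerivAt_deriv x := (hz.hasDerivAt_deriv x).congr_deriv (by ring)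
  deriv_zero := hz.deriv_zero
  pi_div_two := hz.pi_div_two

theorem eq_zero_of_apply_zero (hv : ∀ x, |v x| ≤ V) (hz : IsMixedSol v lam z z') (h : z 0 = 0) :
    z = 0 := by
  have := hz.eq_of_eq_at hv (hz.toIsHillSol.const_smul 0) (x₀ := 0) (by simp [h])
    (by simp [hz.deriv_zero])
  rwa [zero_smul] at this

theorem eq_smul (hv : ∀ x, |v x| ≤ V) (hz : IsMixedSol v lam z z') (hu : IsHillSol v lam u u')
    (hu₀ : u 0 = 1) (hu₀' : u' 0 = 0) : z = z 0 • u :=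
  hz.eq_of_eq_at hv (hu.const_smul (z 0)) (x₀ := 0) (by simp [hu₀]) (by simp [hu₀', hz.deriv_zero])

theorem apply_zero_eq_zero_of_nonpos (hw : Continuous w) (hw₀ : ∀ x, 0 < w x) (hlam : lam ≤ 0)
    (hz : IsMixedSol w lam z z') : z 0 = 0 := by
  by_contra hne
  have hz_cont := hz.continuous
  have hz'_cont := hz.continuous_deriv
  have hcont : Continuous fun x => z' x * z' x + z x * ((w x - lam) * z x) := by fun_prop
  have henergy : ∫ x in (0 : ℝ)..π / 2, (z' x * z' x + z x * ((w x - lam) * z x)) = 0 := by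
    rw [intervalIntegral.integral_eq_sub_of_hasDerivAt
      (fun x _ => (hz.hasDerivAt x).mul (hz.hasDerivAt_deriv x)) (hcont.intervalIntegrable _ _)]
    simp [hz.deriv_zero, hz.pi_div_two]
  have hcoeff : ∀ x, 0 < w x - lam := fun x => by linarith [hw₀ x]
  refine (intervalIntegral.integral_pos pi_div_two_pos hcont.continuousOn (fun x _ => ?_)
    ⟨0, ⟨le_rfl, pi_div_two_pos.le⟩, ?_⟩).ne' henergy
  · nlinarith [mul_nonneg (hcoeff x).le (mul_self_nonneg (z x)), mul_self_nonneg (z' x)]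
  · nlinarith [mul_pos (hcoeff 0) (mul_self_pos.mpr hne), mul_self_nonneg (z' 0)]

theorem exists_sq_eq {Θ : ℝ → ℝ → ℝ} (hw : Continuous w) (hw₀ : ∀ x, 0 < w x)
    (hwM : ∀ x, w x ≤ M) (hΘ : ∀ ω, 0 < ω → IsPruferAngle w ω (Θ ω))
    (hz : IsMixedSol w lam z z') (hne : z 0 ≠ 0) :
    ∃ ω > 0, ω ^ 2 = lam ∧ ∃ k : ℕ, Θ ω (π / 2) = π * (k + 1) := by
  have hlam : 0 < lam := by
    contrapose! hne
    exact hz.apply_zero_eq_zero_of_nonpos hw hw₀ hne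
  have hω := sqrt_pos.mpr hlam
  have hθ := hΘ _ hω
  have hsol := hθ.isHillSol hw hω
  rw [sq_sqrt hlam.le] at hsol
  have hbound : ∀ x, |w x| ≤ M := fun x => by rw [abs_of_pos (hw₀ x)]; exact hwM x
  have hprop := hz.eq_smul hbound hsol (by simp [pruferRadius, hθ.zero]) (by simp [hθ.zero])
  have hend := congrFun hprop (π / 2)
  rw [hz.pi_div_two] at hend
  have hsin : sin (Θ √lam (π / 2)) = 0 := by
    simpa [hne, pruferRadius, (exp_pos _).ne'] using hend.symm
  exact ⟨√lam, hω, sq_sqrt hlam.le, hθ.exists_nat_pi_div_two_eq hω hsin⟩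

end IsMixedSol

/-- `e k` and `y k`, for `k ≥ 0`, are the eigenvalues of the mixed problem with potential `v` and
their eigenfunctions normalised by `y k 0 = 1`; `C` quantifies how close they are to the free
ones `(2k+1)²` and `cos ((2k+1)x)`. -/
structure IsMixedSpectrum (v : ℝ → ℝ) (e : ℕ → ℝ) (y : ℕ → ℝ → ℝ) (C : ℝ) : Prop where
  strictMono : StrictMono e
  exists_isMixedSol : ∀ k, ∃ y', IsMixedSol v (e k) (y k) y'
  apply_zero : ∀ k, y k 0 = 1
  abs_eigenvalue_sub_le : ∀ k : ℕ, |e k - (2 * k + 1) ^ 2| ≤ C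
  abs_eigenfunction_sub_le : ∀ (k : ℕ), ∀ x ∈ Set.Icc 0 (π / 2),
    |y k x - cos ((2 * k + 1) * x)| ≤ C / (2 * k + 1)
  mem_range : ∀ {lam z z'}, IsMixedSol v lam z z' → z 0 ≠ 0 → lam ∈ Set.range e

theorem abs_sq_sub_sq_le_of_mem_Icc {N M ω : ℝ} (hN : 1 ≤ N) (hM : 0 ≤ M)
    (hω : ω ∈ Set.Icc N (N + M / N)) : |ω ^ 2 - N ^ 2| ≤ M * (M + 2) := by
  have hN₀ : 0 < N := one_pos.trans_le hN
  have hd : (ω - N) * N ≤ M := (le_div_iff₀ hN₀).mp (by linarith [hω.2])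
  have hd₀ : 0 ≤ ω - N := sub_nonneg.mpr hω.1
  have hdM : ω - N ≤ M := by nlinarith
  rw [abs_of_nonneg (by nlinarith)]
  nlinarith

theorem exists_isMixedSpectrum_of_pos {w : ℝ → ℝ} {M : ℝ} (hw : Continuous w)
    (hw₀ : ∀ x, 0 < w x) (hwM : ∀ x, w x ≤ M) : ∃ e y C, IsMixedSpectrum w e y C := by
  have hw₀' : ∀ x, 0 ≤ w x := fun x => (hw₀ x).le
  have hM : 0 ≤ M := (hw₀' 0).trans (hwM 0)
  choose! Θ hΘ using fun ω (hω : 0 < ω) => exists_isPruferAngle hw hw₀' hwM hω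
  choose ω hω hend using IsPruferAngle.exists_pi_div_two_eq hw₀' hwM hΘ
  have hstrict := IsPruferAngle.strictMonoOn_of_forall hw₀' hΘ pi_div_two_pos
  have hmono : StrictMono ω := fun i j hij => by
    refine (hstrict.lt_iff_lt (hω i) (hω j)).mp ?_
    simp only [hend]
    gcongr
  have hθ := fun k => hΘ (ω k) (hω k)
  have hC : 2 * M * exp (2 * M) + 4 * M ≤ 2 * M * exp (2 * M) + 4 * M + M * (M + 2) :=
    le_add_of_nonneg_right (by positivity)
  refine ⟨fun k => ω k ^ 2, fun k x => pruferRadius w (ω k) (Θ (ω k)) x * sin (Θ (ω k) x),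
    2 * M * exp (2 * M) + 4 * M + M * (M + 2), ?_, ?_, ?_, ?_, ?_, ?_⟩
  · exact fun i j hij => pow_lt_pow_left₀ (hmono hij) (hω i).le two_ne_zero
  · exact fun k => ⟨_, (hθ k).isMixedSol hw (hω k) (hend k)⟩
  · exact fun k => by simp [pruferRadius, (hθ k).zero]
  · refine fun k => (abs_sq_sub_sq_le_of_mem_Icc (by linarith [k.cast_nonneg (α := ℝ)]) hM
      ((hθ k).frequency_mem_Icc hw₀' hwM (hω k) (hend k))).trans ?_
    exact le_add_of_nonneg_left (by positivity)
  · refine fun k x hx =>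
      ((hθ k).abs_mul_sin_sub_cos_le hw₀' hwM (hω k) (hend k) hx.1 hx.2).trans ?_
    exact div_le_div_of_nonneg_right hC (by positivity)
  · intro lam z z' hz hne
    obtain ⟨η, hη, rfl, k, hk⟩ := hz.exists_sq_eq hw hw₀ hwM hΘ hne
    have : ω k = η := hstrict.injOn (hω k) hη (by simp only [hend, hk])
    exact ⟨k, by simp only [this]⟩

theorem exists_isMixedSpectrum {v : ℝ → ℝ} {V : ℝ} (hv : Continuous v) (hV : ∀ x, |v x| ≤ V) :
    ∃ e y C, IsMixedSpectrum v e y C := by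
  have hV₀ : 0 ≤ V := (abs_nonneg _).trans (hV 0)
  obtain ⟨e, y, C, h⟩ := exists_isMixedSpectrum_of_pos (w := fun x => v x + (V + 1))
    (M := 2 * V + 1) (by fun_prop) (fun x => by linarith [(abs_le.mp (hV x)).1])
    (fun x => by linarith [(abs_le.mp (hV x)).2])
  refine ⟨fun k => e k - (V + 1), y, C + (V + 1), ?_, fun k => ?_, h.apply_zero, fun k => ?_,
    fun k x hx => ?_, fun {lam z z'} hz hne => ?_⟩
  · exact fun i j hij => sub_lt_sub_right (h.strictMono hij) _
  · obtain ⟨y', hy⟩ := h.exists_isMixedSol k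
    exact ⟨y', by simpa using hy.sub_const (V + 1)⟩
  · have := abs_le.mp (h.abs_eigenvalue_sub_le k)
    exact abs_le.mpr ⟨by linarith, by linarith⟩
  · refine (h.abs_eigenfunction_sub_le k x hx).trans ?_
    gcongr
    linarith
  · obtain ⟨k, hk⟩ := h.mem_range (lam := lam + (V + 1))
      (by simpa only [sub_neg_eq_add] using hz.sub_const (-(V + 1))) hne
    exact ⟨k, by simp only [hk, add_sub_cancel_right]⟩

/-! ### Semi-periodic eigenvalues -/

section SemiPeriodic

variable {v w z z' f : ℝ → ℝ} {lam V : ℝ}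

namespace IsMixedSol

theorem apply_neg (hV : ∀ x, |v x| ≤ V) (hev : ∀ x, v (-x) = v x) (hz : IsMixedSol v lam z z')
    (x : ℝ) : z (-x) = z x := by
  have := (hz.comp_const_sub (a := 0) (by simpa using hev)).eq_of_eq_at hV hz.toIsHillSol
    (x₀ := 0) (by simp) (by simp [hz.deriv_zero])
  simpa using congrFun this x

theorem apply_add_pi (hV : ∀ x, |v x| ≤ V) (hev : ∀ x, v (-x) = v x)
    (hper : ∀ x, v (x + π) = v x) (hz : IsMixedSol v lam z z') (x : ℝ) : z (x + π) = -z x := by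
  have hmid : π - π / 2 = π / 2 := sub_half π
  have hreflect := (hz.comp_const_sub (a := π) fun x => by rw [← hev, ← hper]; ring_nf).eq_of_eq_at
    hV (hz.toIsHillSol.const_smul (-1)) (x₀ := π / 2) (by simp [hmid, hz.pi_div_two])
    (by simp [hmid])
  have := congrFun hreflect (-x)
  simp only [sub_neg_eq_add, Pi.smul_apply, smul_eq_mul, neg_one_mul, hz.apply_neg hV hev] at this
  rw [add_comm, this]

theorem isSemiEF (hv : Continuous v) (hV : ∀ x, |v x| ≤ V) (hev : ∀ x, v (-x) = v x)
    (hper : ∀ x, v (x + π) = v x) (hz : IsMixedSol v lam z z') : IsSemiEF v lam z := by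
  have hz_cont := hz.continuous
  have hd : deriv z = z' := funext fun x => (hz.hasDerivAt x).deriv
  have hdd : deriv z' = fun x => (v x - lam) * z x :=
    funext fun x => (hz.hasDerivAt_deriv x).deriv
  refine ⟨?_, fun x => ?_, hz.apply_add_pi hV hev hper⟩
  · rw [show (2 : WithTop ℕ∞) = 1 + 1 by norm_num, contDiff_succ_iff_deriv, hd,
      contDiff_one_iff_deriv, hdd]
    exact ⟨fun x => (hz.hasDerivAt x).differentiableAt, by simp,
      fun x => (hz.hasDerivAt_deriv x).differentiableAt, by fun_prop⟩
  · rw [hd, hdd]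
    ring

end IsMixedSol

theorem isHillSol_of_isSemiEF (hf : IsSemiEF v lam f) : IsHillSol v lam f (deriv f) := by
  obtain ⟨hsmooth, heq, -⟩ := hf
  rw [show (2 : WithTop ℕ∞) = 1 + 1 by norm_num, contDiff_succ_iff_deriv,
    contDiff_one_iff_deriv] at hsmooth
  obtain ⟨hdiff, -, hdiff', -⟩ := hsmooth
  exact ⟨fun x => (hdiff x).hasDerivAt,
    fun x => (hdiff' x).hasDerivAt.congr_deriv (by linarith [heq x])⟩

theorem isSemiEF_comp_add_const (hf : IsSemiEF v lam f) (a : ℝ) :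
    IsSemiEF (fun x => v (x + a)) lam (fun x => f (x + a)) := by
  have hd : deriv (fun x => f (x + a)) = fun x => deriv f (x + a) :=
    funext fun x => deriv_comp_add_const f a x
  refine ⟨hf.1.comp (contDiff_id.add contDiff_const), fun x => ?_, fun x => ?_⟩
  · rw [hd, deriv_comp_add_const]
    exact hf.2.1 (x + a)
  · simpa only [add_right_comm] using hf.2.2 (x + a)

/-- The even part of `f`. -/
def evenPart (f : ℝ → ℝ) (x : ℝ) : ℝ := (f x + f (-x)) / 2

theorem isMixedSol_evenPart (hev : ∀ x, v (-x) = v x) (hf : IsSemiEF v lam f) :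
    IsMixedSol v lam (evenPart f) (fun x => (deriv f x - deriv f (-x)) / 2) := by
  have hsol := isHillSol_of_isSemiEF hf
  refine ⟨⟨fun x => ?_, fun x => ?_⟩, by simp, ?_⟩
  · exact (((hsol.hasDerivAt x).add
      ((hsol.hasDerivAt (-x)).comp x (hasDerivAt_neg x))).div_const 2).congr_deriv (by ring)
  · refine (((hsol.hasDerivAt_deriv x).sub
      ((hsol.hasDerivAt_deriv (-x)).comp x (hasDerivAt_neg x))).div_const 2).congr_deriv ?_
    rw [hev, evenPart]
    ring
  · have := hf.2.2 (-(π / 2))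
    rw [neg_add_eq_sub, sub_half] at this
    simp [evenPart, this]

-- By antiperiodicity the odd part of `f` is the even part of `f (· + π / 2)`, translated back.
theorem eq_evenPart_add_evenPart_comp (hf : IsSemiEF v lam f) (x : ℝ) :
    f x = evenPart f x + evenPart (fun s => f (s + π / 2)) (x - π / 2) := by
  have := hf.2.2 (-x)
  rw [evenPart, evenPart, sub_add_cancel, show -(x - π / 2) + π / 2 = -x + π by ring, this]
  ring

/-- The eigenspace of the mixed problem with potential `v` at `lam`. -/
def mixedEigenspace (v : ℝ → ℝ) (lam : ℝ) : Submodule ℝ (ℝ → ℝ) where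
  carrier := {z | ∃ z', IsMixedSol v lam z z'}
  add_mem' := fun ⟨_, hz⟩ ⟨_, hu⟩ => ⟨_, hz.add hu⟩
  zero_mem' := ⟨0, ⟨fun x => hasDerivAt_const x 0, fun x => by simp⟩, rfl, rfl⟩
  smul_mem' := fun a _ ⟨_, hz⟩ => ⟨_, hz.const_smul a⟩

/-- Evaluation at `0` on the eigenspace of the mixed problem. -/
def evalZero (v : ℝ → ℝ) (lam : ℝ) : mixedEigenspace v lam →ₗ[ℝ] ℝ :=
  (LinearMap.proj 0).comp (mixedEigenspace v lam).subtype

theorem evalZero_injective (hV : ∀ x, |v x| ≤ V) (lam : ℝ) :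
    Function.Injective (evalZero v lam) := by
  refine (injective_iff_map_eq_zero _).mpr ?_
  rintro ⟨z, z', hz⟩ hzero
  exact Subtype.ext (hz.eq_zero_of_apply_zero hV hzero)

theorem IsMixedSpectrum.subsingleton_fiber {e : ℕ → ℝ} {y : ℕ → ℝ → ℝ} {C : ℝ}
    (he : IsMixedSpectrum v e y C) (lam : ℝ) : Subsingleton {k // e k = lam} :=
  ⟨fun i j => Subtype.ext (he.strictMono.injective (i.2.trans j.2.symm))⟩

theorem finrank_mixedEigenspace {e : ℕ → ℝ} {y : ℕ → ℝ → ℝ} {C : ℝ} (hV : ∀ x, |v x| ≤ V)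
    (he : IsMixedSpectrum v e y C) (lam : ℝ) :
    Module.finrank ℝ (mixedEigenspace v lam) = Nat.card {k // e k = lam} := by
  have := he.subsingleton_fiber lam
  have hinj := evalZero_injective hV lam
  by_cases hlam : lam ∈ Set.range e
  · obtain ⟨k, rfl⟩ := hlam
    have hsurj : Function.Surjective (evalZero v (e k)) := LinearMap.surjective fun hzero =>
      one_ne_zero ((he.apply_zero k).symm.trans
        (LinearMap.congr_fun hzero ⟨y k, he.exists_isMixedSol k⟩))
    have : Nonempty {j // e j = e k} := ⟨⟨k, rfl⟩⟩
    rw [(LinearEquiv.ofBijective _ ⟨hinj, hsurj⟩).finrank_eq, Module.finrank_self, Nat.card_unique]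
  · have : Subsingleton (mixedEigenspace v lam) := by
      refine ⟨fun a b => hinj ?_⟩
      have hzero : ∀ c : mixedEigenspace v lam, evalZero v lam c = 0 := fun ⟨z, z', hz⟩ => by
        by_contra hne
        exact hlam (he.mem_range hz hne)
      rw [hzero, hzero]
    have : IsEmpty {k // e k = lam} := ⟨fun k => hlam ⟨k, k.2⟩⟩
    rw [Module.finrank_zero_of_subsingleton, Nat.card_of_isEmpty]

/-- Adds an eigenfunction of the mixed problem for `v` and the translate by `π / 2` of one for the
translated potential. -/
def addTranslate (v : ℝ → ℝ) (lam : ℝ) :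
    mixedEigenspace v lam × mixedEigenspace (fun x => v (x + π / 2)) lam →ₗ[ℝ] (ℝ → ℝ) :=
  (mixedEigenspace v lam).subtype.coprod
    ((LinearMap.funLeft ℝ ℝ fun x => x - π / 2).comp (mixedEigenspace _ lam).subtype)

variable (hV : ∀ x, |v x| ≤ V) (hev : ∀ x, v (-x) = v x) (hper : ∀ x, v (x + π) = v x)
include hev hper

theorem comp_add_pi_div_two_neg (x : ℝ) : v (-x + π / 2) = v (x + π / 2) := by
  rw [← hev (-x + π / 2), ← hper]
  ring_nf

include hV

theorem addTranslate_injective (lam : ℝ) : Function.Injective (addTranslate v lam) := by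
  refine (injective_iff_map_eq_zero _).mpr ?_
  rintro ⟨⟨z, z', hz⟩, ⟨u, u', hu⟩⟩ hsum
  have hsum' : ∀ x, z x + u (x - π / 2) = 0 := congrFun hsum
  have hu₀ : u 0 = 0 := by simpa [hz.pi_div_two] using hsum' (π / 2)
  have hz₀ : z 0 = 0 := by
    simpa [hu.apply_neg (fun _ => hV _) (comp_add_pi_div_two_neg hev hper), hu.pi_div_two]
      using hsum' 0
  exact Prod.ext (Subtype.ext (hz.eq_zero_of_apply_zero hV hz₀))
    (Subtype.ext (hu.eq_zero_of_apply_zero (fun _ => hV _) hu₀))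

theorem range_addTranslate (hv : Continuous v) (lam : ℝ) :
    LinearMap.range (addTranslate v lam) = Submodule.span ℝ {f | IsSemiEF v lam f} := by
  have hev' := comp_add_pi_div_two_neg hev hper
  refine le_antisymm ?_ (Submodule.span_le.mpr fun f hf => ?_)
  · rintro _ ⟨⟨⟨z, z', hz⟩, ⟨u, u', hu⟩⟩, rfl⟩
    have hu_semi : IsSemiEF v lam fun x => u (x - π / 2) := by
      have := isSemiEF_comp_add_const (hu.isSemiEF (by fun_prop) (fun _ => hV _) hev'
        fun x => by rw [add_right_comm, hper]) (-(π / 2))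
      simpa only [neg_add_cancel_right, ← sub_eq_add_neg, sub_add_cancel] using this
    exact Submodule.add_mem _ (Submodule.subset_span (hz.isSemiEF hv hV hev hper))
      (Submodule.subset_span hu_semi)
  · have hodd := isMixedSol_evenPart hev' (isSemiEF_comp_add_const hf (π / 2))
    exact ⟨⟨⟨_, _, isMixedSol_evenPart hev hf⟩, ⟨_, _, hodd⟩⟩,
      funext fun x => (eq_evenPart_add_evenPart_comp hf x).symm⟩

theorem semiMult_eq_finrank_add_finrank (hv : Continuous v) (lam : ℝ) :
    semiMult v lam = Module.finrank ℝ (mixedEigenspace v lam) +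
      Module.finrank ℝ (mixedEigenspace (fun x => v (x + π / 2)) lam) := by
  have := Module.Finite.of_injective _ (evalZero_injective hV lam)
  have := Module.Finite.of_injective _
    (evalZero_injective (v := fun x => v (x + π / 2)) (fun _ => hV _) lam)
  rw [semiMult, ← range_addTranslate hV hev hper hv,
    LinearMap.finrank_range_of_inj (addTranslate_injective hV hev hper lam), Module.finrank_prod]

theorem semiMult_eq_card_add_card (hv : Continuous v) {e o : ℕ → ℝ} {y u : ℕ → ℝ → ℝ} {C D : ℝ}
    (he : IsMixedSpectrum v e y C) (ho : IsMixedSpectrum (fun x => v (x + π / 2)) o u D)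
    (lam : ℝ) :
    semiMult v lam = Nat.card {k // e k = lam} + Nat.card {k // o k = lam} := by
  rw [semiMult_eq_finrank_add_finrank hV hev hper hv, finrank_mixedEigenspace hV he,
    finrank_mixedEigenspace (fun _ => hV _) ho]

theorem semiMult_pos (hv : Continuous v) (hf : f ≠ 0) (hsemi : IsSemiEF v lam f) :
    0 < semiMult v lam := by
  have := Module.Finite.of_injective _ (evalZero_injective hV lam)
  have := Module.Finite.of_injective _
    (evalZero_injective (v := fun x => v (x + π / 2)) (fun _ => hV _) lam)
  rw [semiMult, ← range_addTranslate hV hev hper hv]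
  have hmem : f ∈ LinearMap.range (addTranslate v lam) := by
    rw [range_addTranslate hV hev hper hv]
    exact Submodule.subset_span hsemi
  have : Nontrivial (LinearMap.range (addTranslate v lam)) :=
    Submodule.nontrivial_iff_ne_bot.mpr ((Submodule.ne_bot_iff _).mpr ⟨f, hmem, hf⟩)
  exact Module.finrank_pos

end SemiPeriodic

theorem exists_equiv_sum_of_card_fiber_eq {α β γ δ : Type*} {f : α → δ} {g : β → δ} {h : γ → δ}
    (hf : ∀ c, Finite {a // f a = c}) (hg : ∀ c, Finite {b // g b = c})
    (hh : ∀ c, Finite {b // h b = c})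
    (hcard : ∀ c, Nat.card {a // f a = c} = Nat.card {b // g b = c} + Nat.card {b // h b = c}) :
    ∃ φ : α ≃ β ⊕ γ, ∀ a, Sum.elim g h (φ a) = f a := by
  have hfiber : ∀ c, Nonempty ({a // f a = c} ≃ {s // Sum.elim g h s = c}) := fun c =>
    (Finite.card_eq.mp ((hcard c).trans Nat.card_sum.symm)).map fun ψ =>
      ψ.trans (Equiv.subtypeSum (p := fun s => Sum.elim g h s = c)).symm
  exact ⟨Equiv.ofFiberEquiv fun c => (hfiber c).some, Equiv.ofFiberEquiv_map _⟩

section Enumeration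

variable {μ e o : ℕ → ℝ} {φ : ℕ ≃ ℕ ⊕ ℕ} {K : ℕ}

theorem lt_iff_lt_two_mul (hμ : Monotone μ) (hφ : ∀ n, Sum.elim e o (φ n) = μ n) {T : ℝ}
    (he : ∀ j, e j < T ↔ j < K) (ho : ∀ j, o j < T ↔ j < K) (n : ℕ) :
    μ n < T ↔ n < 2 * K := by
  set s : Finset ℕ :=
    ((Finset.range K).disjSum (Finset.range K)).map φ.symm.toEmbedding with hs
  have hmem : ∀ m, m ∈ s ↔ μ m < T := by
    intro m
    rw [hs, Finset.mem_map_equiv, Equiv.symm_symm, ← hφ]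
    cases φ m <;> simp [he, ho]
  have hcard : s.card = 2 * K := by simp [hs, two_mul]
  rw [← hmem, ← hcard]
  constructor
  · intro hn
    have : Finset.range (n + 1) ⊆ s := fun m hm => (hmem m).mpr
      ((hμ (Finset.mem_range_succ_iff.mp hm)).trans_lt ((hmem n).mp hn))
    simpa using Finset.card_le_card this
  · contrapose!
    intro hn
    have : s ⊆ Finset.range n := fun m hm => by
      rw [hmem] at hm hn
      exact Finset.mem_range.mpr (hμ.reflect_lt (hm.trans_le (not_lt.mp hn)))
    simpa using Finset.card_le_card this

theorem sub_eq_abs_sub_of_separated (hμ : Monotone μ) (hφ : ∀ n, Sum.elim e o (φ n) = μ n)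
    {T T' : ℝ} (he : ∀ j, e j < T ↔ j < K) (ho : ∀ j, o j < T ↔ j < K)
    (he' : ∀ j, e j < T' ↔ j < K + 1) (ho' : ∀ j, o j < T' ↔ j < K + 1) :
    μ (2 * K + 1) - μ (2 * K) = |e K - o K| := by
  have hpair : ∀ n, 2 * K ≤ n → n < 2 * (K + 1) → φ n = .inl K ∨ φ n = .inr K := by
    intro n hn hn'
    rw [← not_lt, ← lt_iff_lt_two_mul hμ hφ he ho, ← hφ] at hn
    rw [← lt_iff_lt_two_mul hμ hφ he' ho', ← hφ] at hn'
    rcases hj : φ n with j | j <;> rw [hj] at hn hn'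
    · rw [Sum.elim_inl] at hn hn'
      rw [he] at hn
      rw [he'] at hn'
      exact Or.inl (congrArg _ (by omega))
    · rw [Sum.elim_inr] at hn hn'
      rw [ho] at hn
      rw [ho'] at hn'
      exact Or.inr (congrArg _ (by omega))
  have hle : μ (2 * K) ≤ μ (2 * K + 1) := hμ (by omega)
  have hne : φ (2 * K) ≠ φ (2 * K + 1) := φ.injective.ne (by omega)
  rw [← hφ (2 * K), ← hφ (2 * K + 1)] at hle ⊢
  rcases hpair (2 * K) (by omega) (by omega) with h | h <;>
    rcases hpair (2 * K + 1) (by omega) (by omega) with h' | h' <;> rw [h, h'] at hne hle ⊢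
  · exact absurd rfl hne
  · exact ((abs_sub_comm _ _).trans (abs_of_nonneg (sub_nonneg.mpr hle))).symm
  · exact (abs_of_nonneg (sub_nonneg.mpr hle)).symm
  · exact absurd rfl hne

end Enumeration

theorem IsMixedSpectrum.lt_two_mul_sq_iff {v : ℝ → ℝ} {e : ℕ → ℝ} {y : ℕ → ℝ → ℝ} {C : ℝ}
    (h : IsMixedSpectrum v e y C) {K : ℕ} (hK : C + 1 < K) (j : ℕ) :
    e j < (2 * K) ^ 2 ↔ j < K := by
  constructor
  · contrapose!
    intro hj
    have := h.strictMono.monotone hj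
    have := (abs_le.mp (h.abs_eigenvalue_sub_le K)).1
    nlinarith
  · intro hj
    obtain ⟨N, rfl⟩ : ∃ N, K = N + 1 := ⟨K - 1, by omega⟩
    have := h.strictMono.monotone (Nat.le_of_lt_succ hj)
    have := (abs_le.mp (h.abs_eigenvalue_sub_le N)).2
    push_cast at hK ⊢
    nlinarith

theorem exists_forall_semiGap_eq_abs_sub {v : ℝ → ℝ} {V : ℝ} (hv : Continuous v)
    (hV : ∀ x, |v x| ≤ V) (hev : ∀ x, v (-x) = v x) (hper : ∀ x, v (x + π) = v x)
    {lamM e o : ℕ → ℝ} {y u : ℕ → ℝ → ℝ} {C D : ℝ} (hlam : EnumSemi v lamM)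
    (he : IsMixedSpectrum v e y C) (ho : IsMixedSpectrum (fun x => v (x + π / 2)) o u D) :
    ∃ K₀, ∀ K ≥ K₀, lamM (2 * K + 2) - lamM (2 * K + 1) = |e K - o K| := by
  obtain ⟨hmono, hex, hcard⟩ := hlam
  have hshift : ∀ c, {n // 1 ≤ n ∧ lamM n = c} ≃ {n // lamM (n + 1) = c} := fun c =>
    { toFun := fun n => ⟨n - 1, by rw [Nat.sub_add_cancel n.2.1, n.2.2]⟩
      invFun := fun n => ⟨n + 1, by omega, n.2⟩
      left_inv := fun n => Subtype.ext (Nat.sub_add_cancel n.2.1)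
      right_inv := fun n => rfl }
  have hcard' : ∀ c, Nat.card {n // lamM (n + 1) = c} =
      Nat.card {k // e k = c} + Nat.card {k // o k = c} := fun c => by
    rw [← Nat.card_congr (hshift c), hcard, semiMult_eq_card_add_card hV hev hper hv he ho]
  have hfin : ∀ c, Finite {n // lamM (n + 1) = c} := by
    intro c
    by_contra hinf
    have hne : Nonempty {n // lamM (n + 1) = c} := by
      rw [not_finite_iff_infinite] at hinf
      infer_instance
    obtain ⟨n, rfl⟩ := hne
    obtain ⟨f, hf, hsemi⟩ := hex (n + 1) n.succ_pos
    have hpos := semiMult_pos hV hev hper hv hf hsemi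
    rw [← hcard, Nat.card_congr (hshift _)] at hpos
    exact hinf (Nat.card_pos_iff.mp hpos).2
  obtain ⟨φ, hφ⟩ := exists_equiv_sum_of_card_fiber_eq hfin
    (fun c => have := he.subsingleton_fiber c; inferInstance)
    (fun c => have := ho.subsingleton_fiber c; inferInstance) hcard'
  obtain ⟨K₀, hK₀⟩ := exists_nat_gt (max C D + 1)
  refine ⟨K₀, fun K hK => ?_⟩
  have hCD : max C D + 1 < K := hK₀.trans_le (by exact_mod_cast hK)
  have hC : C + 1 < K := by linarith [le_max_left C D]
  have hD : D + 1 < K := by linarith [le_max_right C D]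
  exact sub_eq_abs_sub_of_separated (μ := fun n => lamM (n + 1))
    (fun m n hmn => hmono (by simp) (by simp) (by omega)) hφ
    (he.lt_two_mul_sq_iff hC) (ho.lt_two_mul_sq_iff hD)
    (he.lt_two_mul_sq_iff (K := K + 1) (by push_cast; linarith))
    (ho.lt_two_mul_sq_iff (K := K + 1) (by push_cast; linarith))

/-- The Whittaker–Hill potential in Magnus–Winkler's parametrisation. -/
def potential (α t x : ℝ) : ℝ := -(4 * α * t) * cos (2 * x) - 2 * α ^ 2 * cos (4 * x)

section Potential

variable (α t x : ℝ)

theorem continuous_potential : Continuous (potential α t) := by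
  unfold potential
  fun_prop

theorem abs_potential_le : |potential α t x| ≤ |4 * α * t| + 2 * α ^ 2 := by
  refine (abs_sub _ _).trans ?_
  rw [abs_mul, abs_mul (2 * α ^ 2), abs_neg, abs_of_nonneg (show 0 ≤ 2 * α ^ 2 by positivity)]
  exact add_le_add (mul_le_of_le_one_right (abs_nonneg _) (abs_cos_le_one _))
    (mul_le_of_le_one_right (by positivity) (abs_cos_le_one _))

theorem potential_neg : potential α t (-x) = potential α t x := by
  simp only [potential, mul_neg, cos_neg]

theorem potential_add_pi : potential α t (x + π) = potential α t x := by
  rw [potential, show 2 * (x + π) = 2 * x + 2 * π by ring,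
    show 4 * (x + π) = 4 * x + 2 * π + 2 * π by ring, cos_add_two_pi, cos_add_two_pi,
    cos_add_two_pi, potential]

theorem potential_add_pi_div_two : potential α t (x + π / 2) = potential α (-t) x := by
  rw [potential, show 2 * (x + π / 2) = 2 * x + π by ring,
    show 4 * (x + π / 2) = 4 * x + 2 * π by ring, cos_add_two_pi, cos_add_pi, potential]
  ring

end Potential

/-! ### Fourier coefficients on a quarter period -/

section CosCoeff

variable {f g : ℝ → ℝ} {ν : ℝ}

/-- The cosine coefficient of frequency `ν` of a function on `[0, π/2]`; for odd `ν` (resp. even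
`ν`) these are the Fourier coefficients of the extension that is even about `0` and odd (resp.
even) about `π/2`. -/
def cosCoeff (f : ℝ → ℝ) (ν : ℝ) : ℝ := 2 / π * ∫ x in 0..π / 2, f x * cos (ν * x)

theorem cosCoeff_neg_right : cosCoeff f (-ν) = cosCoeff f ν := by
  simp only [cosCoeff, neg_mul, cos_neg]

theorem cosCoeff_add (hf : Continuous f) (hg : Continuous g) :
    cosCoeff (fun x => f x + g x) ν = cosCoeff f ν + cosCoeff g ν := by
  simp only [cosCoeff, add_mul]
  rw [intervalIntegral.integral_add (Continuous.intervalIntegrable (by fun_prop) _ _)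
    (Continuous.intervalIntegrable (by fun_prop) _ _), mul_add]

theorem cosCoeff_sub (hf : Continuous f) (hg : Continuous g) :
    cosCoeff (fun x => f x - g x) ν = cosCoeff f ν - cosCoeff g ν := by
  simp only [cosCoeff, sub_mul]
  rw [intervalIntegral.integral_sub (Continuous.intervalIntegrable (by fun_prop) _ _)
    (Continuous.intervalIntegrable (by fun_prop) _ _), mul_sub]

theorem integral_neg_self_eq_integral_comp_neg_add {E : Type*} [NormedAddCommGroup E]
    [NormedSpace ℝ E] {F : ℝ → E} (hF : Continuous F) (a : ℝ) :
    ∫ x in (-a)..a, F x = ∫ x in 0..a, (F (-x) + F x) := by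
  rw [intervalIntegral.integral_add (Continuous.intervalIntegrable (by fun_prop) _ _)
    (hF.intervalIntegrable _ _), intervalIntegral.integral_comp_neg, neg_zero,
    intervalIntegral.integral_add_adjacent_intervals (hF.intervalIntegrable _ _)
      (hF.intervalIntegrable _ _)]

theorem fourierCoeffOn_comp_abs_mul_exp (hf : Continuous f) (s : ℝ) (h : -(π / 2) < π / 2)
    (n : ℤ) :
    fourierCoeffOn h (fun x => f |x| * Complex.exp (-(s * x : ℝ) * Complex.I)) n =
      cosCoeff f (2 * n + s) := by
  have hlen : π / 2 - -(π / 2) = π := by ring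
  have hcharacter : ∀ x : ℝ, (fourier (-n) : C(AddCircle (π / 2 - -(π / 2)), ℂ)) x =
      Complex.exp (-(2 * n * x : ℝ) * Complex.I) := by
    intro x
    rw [fourier_coe_apply, hlen]
    congr 1
    have : (π : ℂ) ≠ 0 := by exact_mod_cast pi_ne_zero
    push_cast
    field_simp
  rw [fourierCoeffOn_eq_integral]
  simp only [hcharacter, smul_eq_mul]
  rw [integral_neg_self_eq_integral_comp_neg_add (by fun_prop)]
  have hintegrand : ∀ x ∈ Set.uIcc 0 (π / 2),
      Complex.exp (-(2 * n * (-x) : ℝ) * Complex.I) *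
          (f |-x| * Complex.exp (-(s * (-x) : ℝ) * Complex.I)) +
        Complex.exp (-(2 * n * x : ℝ) * Complex.I) *
          (f |x| * Complex.exp (-(s * x : ℝ) * Complex.I)) =
      ((2 * (f x * cos ((2 * n + s) * x)) : ℝ) : ℂ) := by
    intro x hx
    rw [Set.uIcc_of_le (by positivity)] at hx
    rw [abs_neg, abs_of_nonneg hx.1, mul_left_comm, ← Complex.exp_add, mul_left_comm,
      ← Complex.exp_add]
    push_cast
    rw [Complex.cos]
    ring_nf
  rw [intervalIntegral.integral_congr hintegrand, intervalIntegral.integral_ofReal, hlen,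
    intervalIntegral.integral_const_mul, Complex.real_smul, cosCoeff]
  push_cast
  ring

theorem hasSum_sq_cosCoeff (hf : Continuous f) (s : ℝ) :
    HasSum (fun n : ℤ => cosCoeff f (2 * n + s) ^ 2) (2 / π * ∫ x in 0..π / 2, f x ^ 2) := by
  have h : -(π / 2) < π / 2 := by linarith [pi_pos]
  set F : ℝ → ℂ := fun x => f |x| * Complex.exp (-(s * x : ℝ) * Complex.I)
  have hF : Continuous F := by fun_prop
  have hnorm : ∀ x, ‖F x‖ = |f (|x|)| := fun x => by
    simp only [F, norm_mul, Complex.norm_real, norm_eq_abs]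
    rw [← Complex.ofReal_neg, Complex.norm_exp_ofReal_mul_I, mul_one]
  have hLp : MeasureTheory.MemLp F 2
      (MeasureTheory.volume.restrict (Set.Ioc (-(π / 2)) (π / 2))) := by
    obtain ⟨B, hB⟩ := isCompact_Icc.exists_bound_of_continuousOn hF.continuousOn
    refine MeasureTheory.MemLp.of_bound (by fun_prop) B ?_
    filter_upwards [MeasureTheory.ae_restrict_mem measurableSet_Ioc] with x hx
    exact hB x (Set.Ioc_subset_Icc_self hx)
  have hparseval := hasSum_sq_fourierCoeffOn h hLp
  simp only [F, fourierCoeffOn_comp_abs_mul_exp hf s h, Complex.norm_real, norm_eq_abs,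
    sq_abs] at hparseval
  convert! hparseval using 1
  have hsq : ∀ x ∈ Set.uIcc 0 (π / 2), ‖F (-x)‖ ^ 2 + ‖F x‖ ^ 2 = 2 * f x ^ 2 := by
    intro x hx
    rw [Set.uIcc_of_le (by positivity)] at hx
    rw [hnorm, hnorm, abs_neg, abs_of_nonneg hx.1, sq_abs]
    ring
  rw [integral_neg_self_eq_integral_comp_neg_add (by fun_prop),
    intervalIntegral.integral_congr hsq, intervalIntegral.integral_const_mul, smul_eq_mul,
    show π / 2 - -(π / 2) = π by ring]
  ring

theorem hasSum_sq_cosCoeff_odd (hf : Continuous f) :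
    HasSum (fun k : ℕ => cosCoeff f (2 * k + 1) ^ 2) (1 / π * ∫ x in 0..π / 2, f x ^ 2) := by
  have hpair := ((hasSum_sq_cosCoeff hf 1).nat_add_neg_add_one).div_const 2
  convert! hpair using 1
  · funext k
    have hreflect : cosCoeff f (2 * (-(k + 1 : ℤ) : ℤ) + 1) = cosCoeff f (2 * k + 1) := by
      rw [← cosCoeff_neg_right]
      congr 1
      push_cast
      ring
    rw [hreflect, Int.cast_natCast]
    ring
  · ring

end CosCoeff

/-! ### Modified Bessel coefficients -/

section Bessel

variable {α : ℝ}

/-- The weight that turns the Whittaker–Hill equation into a three-term recurrence for Fourier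
coefficients. -/
def expWeight (α x : ℝ) : ℝ := exp (-α * cos (2 * x))

@[fun_prop]
theorem continuous_expWeight : Continuous (expWeight α) := by
  unfold expWeight
  fun_prop

theorem expWeight_mul_expWeight_neg (α x : ℝ) : expWeight α x * expWeight (-α) x = 1 := by
  rw [expWeight, expWeight, ← exp_add, neg_neg, neg_mul, neg_add_cancel, exp_zero]

theorem expWeight_pos (α x : ℝ) : 0 < expWeight α x := exp_pos _

theorem expWeight_le (α x : ℝ) : expWeight α x ≤ exp |α| := by
  refine exp_le_exp.mpr ((le_abs_self _).trans ?_)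
  rw [abs_mul, abs_neg]
  exact mul_le_of_le_one_right (abs_nonneg _) (abs_cos_le_one _)

theorem expWeight_pi_div_two_sub (x : ℝ) : expWeight (-α) (π / 2 - x) = expWeight α x := by
  rw [expWeight, expWeight, show 2 * (π / 2 - x) = π - 2 * x by ring, cos_pi_sub]
  ring_nf

theorem hasDerivAt_expWeight (α x : ℝ) :
    HasDerivAt (expWeight α) (2 * α * sin (2 * x) * expWeight α x) x := by
  have h : HasDerivAt (fun x : ℝ => 2 * x) 2 x := by simpa using (hasDerivAt_id x).const_mul 2
  exact ((h.cos.const_mul (-α)).exp).congr_deriv (by rw [expWeight]; ring)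

/-- The Fourier coefficient of `expWeight α` of frequency `2 * j`, that is, the value
`I_j(-α)` of the modified Bessel function. -/
def besselCoeff (α : ℝ) (j : ℤ) : ℝ := cosCoeff (expWeight α) (2 * j)

theorem besselCoeff_neg_left (j : ℤ) : besselCoeff (-α) j = (-1) ^ j * besselCoeff α j := by
  have hsubst := intervalIntegral.integral_comp_sub_left (a := 0) (b := π / 2)
    (fun x => expWeight (-α) x * cos (2 * j * x)) (π / 2)
  rw [sub_zero, sub_self] at hsubst
  rw [besselCoeff, besselCoeff, cosCoeff, cosCoeff, ← hsubst, mul_left_comm,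
    ← intervalIntegral.integral_const_mul ((-1 : ℝ) ^ j)]
  refine congrArg (2 / π * ·) (intervalIntegral.integral_congr fun x _ => ?_)
  rw [expWeight_pi_div_two_sub, show 2 * j * (π / 2 - x) = j * π - 2 * j * x by ring, cos_sub,
    cos_int_mul_pi, sin_int_mul_pi]
  ring

theorem mul_besselCoeff (j : ℤ) :
    j * besselCoeff α j = α / 2 * (besselCoeff α (j + 1) - besselCoeff α (j - 1)) := by
  have hderiv : ∀ x, HasDerivAt (fun x => expWeight α x * sin (2 * j * x))
      (2 * j * (expWeight α x * cos (2 * j * x)) +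
        α * (expWeight α x * cos (2 * (j - 1 : ℤ) * x)) -
        α * (expWeight α x * cos (2 * (j + 1 : ℤ) * x))) x := by
    intro x
    have h : HasDerivAt (fun x : ℝ => 2 * (j : ℝ) * x) (2 * j) x := by
      simpa using (hasDerivAt_id x).const_mul (2 * (j : ℝ))
    refine ((hasDerivAt_expWeight α x).mul h.sin).congr_deriv ?_
    push_cast
    rw [show 2 * ((j : ℝ) - 1) * x = 2 * j * x - 2 * x by ring,
      show 2 * ((j : ℝ) + 1) * x = 2 * j * x + 2 * x by ring, cos_sub, cos_add]
    ring
  have hint : ∀ (r : ℝ) (ν : ℝ), IntervalIntegrable (fun x => r * (expWeight α x * cos (ν * x)))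
      MeasureTheory.volume 0 (π / 2) :=
    fun r ν => Continuous.intervalIntegrable (by fun_prop) _ _
  have hftc := intervalIntegral.integral_eq_sub_of_hasDerivAt (fun x _ => hderiv x)
    (((hint _ _).add (hint _ _)).sub (hint _ _))
  rw [show 2 * (j : ℝ) * (π / 2) = j * π by ring, sin_int_mul_pi, mul_zero, mul_zero, sin_zero,
    mul_zero, sub_zero, intervalIntegral.integral_sub ((hint _ _).add (hint _ _)) (hint _ _),
    intervalIntegral.integral_add (hint _ _) (hint _ _)] at hftc
  simp only [intervalIntegral.integral_const_mul] at hftc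
  simp only [besselCoeff, cosCoeff]
  linear_combination 1 / π * hftc

theorem hasSum_neg_one_zpow_mul_sq_besselCoeff (α : ℝ) :
    HasSum (fun j : ℤ => (-1) ^ j * besselCoeff α j ^ 2) 1 := by
  have hadd := hasSum_sq_cosCoeff (f := fun x => expWeight α x + expWeight (-α) x) (by fun_prop) 0
  have hsub := hasSum_sq_cosCoeff (f := fun x => expWeight α x - expWeight (-α) x) (by fun_prop) 0
  simp only [add_zero] at hadd hsub
  have hpolar : ∫ x in 0..π / 2, (expWeight α x + expWeight (-α) x) ^ 2 =
      (∫ x in 0..π / 2, (expWeight α x - expWeight (-α) x) ^ 2) + 2 * π := by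
    rw [← sub_eq_iff_eq_add', ← intervalIntegral.integral_sub
      (Continuous.intervalIntegrable (by fun_prop) _ _)
      (Continuous.intervalIntegrable (by fun_prop) _ _), intervalIntegral.integral_congr
      (g := fun _ => 4) fun x _ => by linear_combination 4 * expWeight_mul_expWeight_neg α x]
    rw [intervalIntegral.integral_const, smul_eq_mul]
    ring
  convert! (hadd.sub hsub).div_const 4 using 1
  · funext j
    rw [cosCoeff_add (by fun_prop) (by fun_prop), cosCoeff_sub (by fun_prop) (by fun_prop)]
    change _ = ((besselCoeff α j + besselCoeff (-α) j) ^ 2 -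
      (besselCoeff α j - besselCoeff (-α) j) ^ 2) / 4
    rw [besselCoeff_neg_left]
    ring
  · rw [hpolar]
    field_simp
    ring

theorem summable_sq_besselCoeff (α : ℝ) : Summable fun j : ℤ => besselCoeff α j ^ 2 := by
  simpa only [besselCoeff, add_zero] using
    (hasSum_sq_cosCoeff (f := expWeight α) (by fun_prop) 0).summable

theorem summable_sq_mul_besselCoeff (α : ℝ) :
    Summable fun j : ℤ => (j * besselCoeff α j) ^ 2 := by
  have hsq := summable_sq_besselCoeff α
  have hright := (Equiv.addRight (1 : ℤ)).summable_iff.mpr hsq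
  have hleft := (Equiv.subRight (1 : ℤ)).summable_iff.mpr hsq
  refine .of_nonneg_of_le (fun _ => sq_nonneg _) (fun j => ?_)
    ((hright.add hleft).mul_left (α ^ 2 / 2))
  rw [mul_besselCoeff]
  simp only [Function.comp_apply, Equiv.coe_addRight, Equiv.subRight_apply]
  nlinarith [mul_nonneg (sq_nonneg α)
    (sq_nonneg (besselCoeff α (j + 1) + besselCoeff α (j - 1)))]

end Bessel

section BesselSeries

variable {β : ℝ}

/-- The `i`-th term of `besselSeries β j`. -/
def besselTerm (β : ℝ) (j i : ℕ) : ℝ := β ^ i * j.factorial / (i.factorial * (i + j).factorial)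

/-- The normalized Bessel series `₀F₁(; j + 1; β)`, so that
`I_j(α) = (α / 2) ^ j / j! * besselSeries (α ^ 2 / 4) j`. -/
def besselSeries (β : ℝ) (j : ℕ) : ℝ := ∑' i, besselTerm β j i

theorem besselTerm_zero_right (j : ℕ) : besselTerm β j 0 = 1 := by
  simp [besselTerm, (Nat.factorial_pos j).ne']

theorem besselTerm_nonneg (hβ : 0 ≤ β) (j i : ℕ) : 0 ≤ besselTerm β j i := by
  unfold besselTerm
  positivity

theorem besselTerm_le (hβ : 0 ≤ β) (j i : ℕ) : besselTerm β j i ≤ β ^ i / i.factorial := by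
  have hfactorial : (j.factorial : ℝ) ≤ (i + j).factorial := by
    exact_mod_cast Nat.factorial_le (Nat.le_add_left j i)
  rw [besselTerm, mul_div_mul_comm]
  exact mul_le_of_le_one_right (by positivity) (div_le_one_of_le₀ hfactorial (by positivity))

theorem besselTerm_succ_le (hβ : 0 ≤ β) (j i : ℕ) :
    besselTerm β j (i + 1) ≤ β ^ (i + 1) / (i + 1).factorial / (j + 1) := by
  have hfactorial : ((j + 1) * j.factorial : ℝ) ≤ (i + 1 + j).factorial := by
    exact_mod_cast Nat.factorial_le (show j + 1 ≤ i + 1 + j by omega)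
  rw [besselTerm, mul_div_mul_comm, div_eq_mul_one_div _ ((j : ℝ) + 1)]
  refine mul_le_mul_of_nonneg_left ?_ (by positivity)
  rw [div_le_div_iff₀ (by positivity) (by positivity)]
  linarith

theorem summable_besselTerm (hβ : 0 ≤ β) (j : ℕ) : Summable (besselTerm β j) :=
  .of_nonneg_of_le (besselTerm_nonneg hβ j) (besselTerm_le hβ j)
    (Real.summable_pow_div_factorial β)

theorem besselSeries_eq_add (hβ : 0 ≤ β) (j : ℕ) :
    besselSeries β j =
      besselSeries β (j + 1) + β / ((j + 1) * (j + 2)) * besselSeries β (j + 2) := by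
  have hshift := (summable_nat_add_iff 1).2 (summable_besselTerm hβ (j + 1))
  have hscale := (summable_besselTerm hβ (j + 2)).mul_left (β / ((j + 1) * (j + 2)))
  rw [besselSeries, besselSeries, besselSeries, (summable_besselTerm hβ j).tsum_eq_zero_add,
    (summable_besselTerm hβ (j + 1)).tsum_eq_zero_add, ← tsum_mul_left, add_assoc,
    ← hshift.tsum_add hscale, besselTerm_zero_right, besselTerm_zero_right]
  congr 1
  refine tsum_congr fun i => ?_
  simp only [besselTerm]
  rw [show i + 1 + j = (i + j) + 1 by ring, show i + 1 + (j + 1) = (i + j) + 2 by ring,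
    show i + (j + 2) = (i + j) + 2 by ring]
  simp only [Nat.factorial_succ]
  push_cast
  field_simp
  ring

theorem besselSeries_eq_one_add (hβ : 0 ≤ β) (j : ℕ) :
    besselSeries β j = 1 + ∑' i, besselTerm β j (i + 1) := by
  rw [besselSeries, (summable_besselTerm hβ j).tsum_eq_zero_add, besselTerm_zero_right]

theorem one_le_besselSeries (hβ : 0 ≤ β) (j : ℕ) : 1 ≤ besselSeries β j := by
  rw [besselSeries_eq_one_add hβ]
  exact le_add_of_nonneg_right (tsum_nonneg fun i => besselTerm_nonneg hβ j _)

theorem besselSeries_le (hβ : 0 ≤ β) (j : ℕ) : besselSeries β j ≤ 1 + exp β / (j + 1) := by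
  have hexp := Real.summable_pow_div_factorial β
  have htail := ((summable_nat_add_iff 1).2 (summable_besselTerm hβ j)).tsum_le_tsum
    (besselTerm_succ_le hβ j) (((summable_nat_add_iff 1).2 hexp).div_const _)
  have hexp_eq : exp β = 1 + ∑' i : ℕ, β ^ (i + 1) / (i + 1).factorial := by
    rw [Real.exp_eq_exp_ℝ, NormedSpace.exp_eq_tsum_div]
    beta_reduce
    rw [hexp.tsum_eq_zero_add, pow_zero, Nat.factorial_zero, Nat.cast_one, div_one]
  rw [besselSeries_eq_one_add hβ]
  rw [tsum_div_const] at htail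
  grw [htail]
  gcongr
  linarith

theorem integral_cos_pow_even (n : ℕ) :
    ∫ x in 0..π, cos x ^ (2 * n) = π * (2 * n).factorial / (4 ^ n * n.factorial ^ 2) := by
  induction n with
  | zero => simp
  | succ n ih =>
    rw [show 2 * (n + 1) = 2 * n + 2 by ring, integral_cos_pow, ih]
    simp only [Nat.factorial_succ, sin_pi, sin_zero]
    push_cast
    field_simp
    ring

theorem integral_cos_pow_odd (n : ℕ) : ∫ x in 0..π, cos x ^ (2 * n + 1) = 0 := by
  induction n with
  | zero => simp
  | succ n ih =>
    rw [show 2 * (n + 1) + 1 = 2 * n + 1 + 2 by ring, integral_cos_pow, ih]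
    simp

theorem hasSum_integral_exp_mul_cos (a : ℝ) :
    HasSum (fun n : ℕ => a ^ n / n.factorial * ∫ x in 0..π, cos x ^ n)
      (∫ x in 0..π, exp (a * cos x)) := by
  have hsum := intervalIntegral.hasSum_integral_of_dominated_convergence (a := 0) (b := π)
    (μ := MeasureTheory.volume) (F := fun (n : ℕ) x => (a * cos x) ^ n / n.factorial)
    (f := fun x => exp (a * cos x)) (fun n _ => |a| ^ n / n.factorial) (fun n => by fun_prop)
    (fun n => .of_forall fun x _ => by
      rw [norm_div, norm_pow, norm_eq_abs, abs_mul, RCLike.norm_natCast]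
      gcongr
      exact mul_le_of_le_one_right (abs_nonneg _) (abs_cos_le_one _))
    (.of_forall fun _ _ => Real.summable_pow_div_factorial _) (by simp)
    (.of_forall fun x _ => by
      rw [Real.exp_eq_exp_ℝ]
      exact NormedSpace.expSeries_div_hasSum_exp (a * cos x))
  refine hsum.congr_fun fun n => ?_
  rw [← intervalIntegral.integral_const_mul]
  refine intervalIntegral.integral_congr fun x _ => ?_
  simp only [mul_pow]
  ring

theorem integral_exp_mul_cos (a : ℝ) :
    ∫ x in 0..π, exp (a * cos x) = π * besselSeries (a ^ 2 / 4) 0 := by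
  have hodd : ∀ n ∉ Set.range (fun i : ℕ => 2 * i),
      a ^ n / n.factorial * ∫ x in 0..π, cos x ^ n = 0 := by
    intro n hn
    obtain ⟨k, rfl | rfl⟩ := Nat.even_or_odd' n
    · exact absurd ⟨k, rfl⟩ hn
    · rw [integral_cos_pow_odd, mul_zero]
  have heven := ((mul_right_injective₀ two_ne_zero).hasSum_iff hodd).mpr
    (hasSum_integral_exp_mul_cos a)
  rw [besselSeries, ← tsum_mul_left, ← heven.tsum_eq]
  refine tsum_congr fun n => ?_
  rw [Function.comp_apply, integral_cos_pow_even, besselTerm, pow_mul, div_pow]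
  simp
  field_simp

theorem besselCoeff_zero (α : ℝ) : besselCoeff α 0 = besselSeries (α ^ 2 / 4) 0 := by
  have hsubst := intervalIntegral.integral_comp_mul_left (a := 0) (b := π / 2)
    (fun x => exp (-α * cos x)) (two_ne_zero' ℝ)
  rw [show 2 * (π / 2) = π by ring, mul_zero, integral_exp_mul_cos, smul_eq_mul, neg_sq] at hsubst
  simp only [besselCoeff, cosCoeff, expWeight, Int.cast_zero, mul_zero, zero_mul, cos_zero, mul_one,
    hsubst]
  field_simp

theorem besselCoeff_zero_pos (α : ℝ) : 0 < besselCoeff α 0 := by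
  rw [besselCoeff_zero]
  exact zero_lt_one.trans_le (one_le_besselSeries (by positivity) 0)

end BesselSeries

/-! ### Coefficients of the mixed eigenfunctions -/

section Coefficients

variable {α t : ℝ}

/-- The `n`-th cosine coefficient of `expWeight α * y` for functions that are even about `0` and
odd about `π/2`, normalized so that `cos ((2 * n + 1) * x)` has coefficient `1`. -/
def weightedCoeff (α : ℝ) (y : ℝ → ℝ) (n : ℤ) : ℝ :=
  2 * cosCoeff (fun x => expWeight α x * y x) (2 * n + 1)

theorem weightedCoeff_neg_one (y : ℝ → ℝ) : weightedCoeff α y (-1) = weightedCoeff α y 0 := by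
  rw [weightedCoeff, weightedCoeff, ← cosCoeff_neg_right]
  norm_num

theorem hasSum_sq_weightedCoeff {y : ℝ → ℝ} (hy : Continuous y) :
    HasSum (fun k : ℕ => weightedCoeff α y k ^ 2)
      (4 / π * ∫ x in 0..π / 2, (expWeight α x * y x) ^ 2) := by
  convert! (hasSum_sq_cosCoeff_odd (f := fun x => expWeight α x * y x)
    (by fun_prop)).mul_left 4 using 1
  · funext k
    rw [weightedCoeff, Int.cast_natCast]
    ring
  · ring

theorem tsum_sq_weightedCoeff_le {y : ℝ → ℝ} (hy : Continuous y) {C : ℝ}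
    (hC : ∀ x ∈ Set.Icc 0 (π / 2), |y x| ≤ C) :
    ∑' k : ℕ, weightedCoeff α y k ^ 2 ≤ 2 * (exp |α| * C) ^ 2 := by
  have hpos : 0 ≤ π / 2 := by positivity
  have hbound : ∫ x in 0..π / 2, (expWeight α x * y x) ^ 2 ≤
      ∫ _ in 0..π / 2, (exp |α| * C) ^ 2 := by
    refine intervalIntegral.integral_mono_on hpos (Continuous.intervalIntegrable (by fun_prop) _ _)
      (by simp) fun x hx => sq_le_sq' ?_ ?_ <;>
    · have hxy := mul_le_mul (expWeight_le α x) (hC x hx) (abs_nonneg _) (exp_pos _).le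
      rw [← abs_of_pos (expWeight_pos α x), ← abs_mul] at hxy
      linarith [abs_le.mp hxy]
  rw [(hasSum_sq_weightedCoeff hy).tsum_eq]
  grw [hbound]
  rw [intervalIntegral.integral_const, smul_eq_mul, sub_zero]
  refine le_of_eq ?_
  field_simp
  ring

theorem IsHillSol.hasDerivAt_weighted_wronskian {lam : ℝ} {y y' : ℝ → ℝ}
    (h : IsHillSol (potential α t) lam y y') (n : ℤ) (x : ℝ) :
    HasDerivAt (fun x =>
      y x * (expWeight α x *
        (2 * α * sin (2 * x) * cos ((2 * n + 1) * x) - (2 * n + 1) * sin ((2 * n + 1) * x))) -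
        y' x * (expWeight α x * cos ((2 * n + 1) * x)))
      ((lam + 2 * α ^ 2 - (2 * n + 1) ^ 2) * (expWeight α x * y x * cos ((2 * n + 1) * x)) +
        2 * α * (t - 2 * n) * (expWeight α x * y x * cos ((2 * (n - 1 : ℤ) + 1) * x)) +
        2 * α * (2 * n + 2 + t) *
          (expWeight α x * y x * cos ((2 * (n + 1 : ℤ) + 1) * x))) x := by
  have hmul : ∀ c : ℝ, HasDerivAt (fun x : ℝ => c * x) c x := fun c => by
    simpa using (hasDerivAt_id x).const_mul c
  have hcos := (hmul (2 * n + 1)).cos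
  have htrig := (((hmul 2).sin.const_mul (2 * α)).mul hcos).sub
    ((hmul (2 * n + 1)).sin.const_mul (2 * (n : ℝ) + 1))
  refine (((h.hasDerivAt x).mul ((hasDerivAt_expWeight α x).mul htrig)).sub
    ((h.hasDerivAt_deriv x).mul ((hasDerivAt_expWeight α x).mul hcos))).congr_deriv ?_
  unfold potential
  simp only [Pi.sub_apply, Pi.mul_apply]
  push_cast
  rw [show (2 * ((n : ℝ) - 1) + 1) * x = (2 * n + 1) * x - 2 * x by ring,
    show (2 * ((n : ℝ) + 1) + 1) * x = (2 * n + 1) * x + 2 * x by ring, cos_sub, cos_add,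
    show 4 * x = 2 * (2 * x) by ring, cos_two_mul (2 * x)]
  linear_combination (4 * α ^ 2 * expWeight α x * y x * cos ((2 * n + 1) * x)) *
    sin_sq_add_cos_sq (2 * x)

theorem IsMixedSol.weightedCoeff_recurrence {lam : ℝ} {y y' : ℝ → ℝ}
    (h : IsMixedSol (potential α t) lam y y') (n : ℤ) :
    (lam + 2 * α ^ 2 - (2 * n + 1) ^ 2) * weightedCoeff α y n +
      2 * α * (t - 2 * n) * weightedCoeff α y (n - 1) +
      2 * α * (2 * n + 2 + t) * weightedCoeff α y (n + 1) = 0 := by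
  have hy := h.continuous
  have hint : ∀ r ν : ℝ, IntervalIntegrable (fun x => r * (expWeight α x * y x * cos (ν * x)))
      MeasureTheory.volume 0 (π / 2) :=
    fun r ν => Continuous.intervalIntegrable (by fun_prop) _ _
  have hftc := intervalIntegral.integral_eq_sub_of_hasDerivAt
    (fun x _ => h.hasDerivAt_weighted_wronskian n x)
    (((hint _ _).add (hint _ _)).add (hint _ _))
  have hcos_zero : cos ((2 * n + 1) * (π / 2)) = 0 := by
    rw [show (2 * (n : ℝ) + 1) * (π / 2) = n * π + π / 2 by ring, cos_add_pi_div_two,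
      sin_int_mul_pi, neg_zero]
  rw [h.deriv_zero, h.pi_div_two, hcos_zero, intervalIntegral.integral_add
    ((hint _ _).add (hint _ _)) (hint _ _), intervalIntegral.integral_add (hint _ _) (hint _ _)]
    at hftc
  simp only [mul_zero, sin_zero, zero_mul, sub_self, intervalIntegral.integral_const_mul] at hftc
  simp only [weightedCoeff, cosCoeff]
  linear_combination 4 / π * hftc

/-- The weighted coefficients of `cos ((2 * K + 1) * x)`, the leading approximation to those of
the `K`-th eigenfunction. -/
def besselPair (α : ℝ) (K k : ℕ) : ℝ := besselCoeff α (K - k) + besselCoeff α (K + k + 1)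

theorem weightedCoeff_cos (K k : ℕ) :
    weightedCoeff α (fun x => cos ((2 * K + 1) * x)) k = besselPair α K k := by
  have hprod : ∀ x : ℝ, expWeight α x * cos ((2 * K + 1) * x) * cos ((2 * (k : ℤ) + 1) * x) =
      1 / 2 * (expWeight α x * cos (2 * ((K : ℤ) - k : ℤ) * x)) +
        1 / 2 * (expWeight α x * cos (2 * ((K : ℤ) + k + 1 : ℤ) * x)) := by
    intro x
    push_cast
    rw [show 2 * ((K : ℝ) - k) * x = (2 * K + 1) * x - (2 * k + 1) * x by ring,
      show 2 * ((K : ℝ) + k + 1) * x = (2 * K + 1) * x + (2 * k + 1) * x by ring, cos_sub, cos_add]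
    ring
  simp only [weightedCoeff, cosCoeff, besselPair, besselCoeff, hprod]
  rw [intervalIntegral.integral_add (Continuous.intervalIntegrable (by fun_prop) _ _)
    (Continuous.intervalIntegrable (by fun_prop) _ _), intervalIntegral.integral_const_mul,
    intervalIntegral.integral_const_mul]
  ring

theorem summable_sq_besselPair (α : ℝ) (K : ℕ) : Summable fun k => besselPair α K k ^ 2 := by
  simp only [← weightedCoeff_cos]
  exact (hasSum_sq_weightedCoeff (by fun_prop)).summable

theorem tsum_sq_besselPair_le (α : ℝ) (K : ℕ) :
    ∑' k, besselPair α K k ^ 2 ≤ 2 * exp |α| ^ 2 := by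
  simp only [← weightedCoeff_cos]
  simpa using tsum_sq_weightedCoeff_le (α := α) (y := fun x => cos ((2 * K + 1) * x))
    (by fun_prop) fun _ _ => abs_cos_le_one _

/-- For every `K`, a solution `g K` of the three-term recurrence satisfied by the weighted
coefficients of an even Whittaker–Hill eigenfunction, with spectral parameter `μ K` shifted by
`2 * α ^ 2`, that is close to the unperturbed coefficients. -/
structure IsCoeffFamily (α t D : ℝ) (μ : ℕ → ℝ) (g : ℕ → ℕ → ℝ) : Prop where
  rec_zero : ∀ K, (1 - μ K - 2 * α * t) * g K 0 = 2 * α * (2 + t) * g K 1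
  rec_succ : ∀ K k : ℕ, ((2 * (k + 1 : ℝ) + 1) ^ 2 - μ K) * g K (k + 1) +
    2 * α * (2 * (k + 1) - t) * g K k = 2 * α * (2 * (k + 1) + 2 + t) * g K (k + 2)
  summable_sq_sub : ∀ K, Summable fun k => (g K k - besselPair α K k) ^ 2
  tsum_sq_sub_le : ∀ K : ℕ, ∑' k, (g K k - besselPair α K k) ^ 2 ≤ (D / (2 * K + 1)) ^ 2
  abs_sub_le : ∀ K : ℕ, |μ K - (2 * K + 1) ^ 2| ≤ D

theorem IsMixedSpectrum.exists_isCoeffFamily {e : ℕ → ℝ} {y : ℕ → ℝ → ℝ} {C : ℝ}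
    (h : IsMixedSpectrum (potential α t) e y C) :
    ∃ D, IsCoeffFamily α t D (fun K => e K + 2 * α ^ 2) fun K k => weightedCoeff α (y K) k := by
  have hC : 0 ≤ C := (abs_nonneg _).trans (h.abs_eigenvalue_sub_le 0)
  have hy : ∀ K, Continuous (y K) := fun K =>
    let ⟨_, hsol⟩ := h.exists_isMixedSol K
    hsol.continuous
  have hsub : ∀ K k : ℕ, weightedCoeff α (y K) k - besselPair α K k =
      weightedCoeff α (fun x => y K x - cos ((2 * K + 1) * x)) k := by
    intro K k
    have := hy K
    rw [← weightedCoeff_cos]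
    simp only [weightedCoeff, mul_sub]
    rw [cosCoeff_sub (by fun_prop) (by fun_prop), mul_sub]
  refine ⟨2 * exp |α| * C + C + 2 * α ^ 2, fun K => ?_, fun K k => ?_, fun K => ?_, fun K => ?_,
    fun K => ?_⟩
  · obtain ⟨_, hsol⟩ := h.exists_isMixedSol K
    have hrec := hsol.weightedCoeff_recurrence 0
    rw [zero_sub, weightedCoeff_neg_one, zero_add, Int.cast_zero] at hrec
    push_cast
    linear_combination -hrec
  · obtain ⟨_, hsol⟩ := h.exists_isMixedSol K
    have hrec := hsol.weightedCoeff_recurrence (k + 1)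
    rw [add_sub_cancel_right, add_assoc (k : ℤ)] at hrec
    push_cast at hrec ⊢
    linear_combination -hrec
  · simp only [hsub]
    exact (hasSum_sq_weightedCoeff ((hy K).sub (by fun_prop))).summable
  · simp only [hsub]
    refine (tsum_sq_weightedCoeff_le ((hy K).sub (by fun_prop))
      (h.abs_eigenfunction_sub_le K)).trans ?_
    rw [mul_div_assoc', div_pow, div_pow, mul_div_assoc']
    gcongr
    nlinarith [mul_nonneg (exp_pos |α|).le hC, sq_nonneg α]
  · have hshift := abs_sub_abs_le_abs_sub (e K + 2 * α ^ 2 - (2 * K + 1) ^ 2) (2 * α ^ 2)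
    rw [abs_of_nonneg (by positivity : 0 ≤ 2 * α ^ 2)] at hshift
    have heig := h.abs_eigenvalue_sub_le K
    rw [← add_sub_cancel_right (e K) (2 * α ^ 2), sub_right_comm] at heig
    linarith [mul_nonneg (mul_nonneg zero_le_two (exp_pos |α|).le) hC]

end Coefficients

/-! ### The pairing of the two families -/

section Pairing

open Filter Topology

variable {α t D D' : ℝ} {μ μ' : ℕ → ℝ} {g g' : ℕ → ℕ → ℝ} {K : ℕ}

theorem hasSum_neg_one_pow_mul_sq_sub_sq_besselCoeff (α : ℝ) (K : ℕ) :
    HasSum (fun k : ℕ => (-1) ^ k *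
      (besselCoeff α (K - k) ^ 2 - besselCoeff α (K + k + 1) ^ 2)) ((-1) ^ K) := by
  have hpair := (((Equiv.subLeft (K : ℤ)).hasSum_iff.mpr
    (hasSum_neg_one_zpow_mul_sq_besselCoeff α)).nat_add_neg_add_one).mul_left ((-1 : ℝ) ^ K)
  rw [mul_one] at hpair
  refine hpair.congr_fun fun k => ?_
  have hsign : ((-1 : ℝ) ^ K) * (-1) ^ (K - k : ℤ) = (-1) ^ k := by
    rw [zpow_sub₀ (by norm_num), zpow_natCast, zpow_natCast, mul_div_assoc', ← mul_pow]
    simp [div_eq_mul_inv, ← inv_pow, inv_neg]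
  have hsign' : ((-1 : ℝ) ^ K) * (-1) ^ (K + k + 1 : ℤ) = -(-1) ^ k := by
    rw [zpow_add_one₀ (by norm_num), zpow_add₀ (by norm_num), zpow_natCast, zpow_natCast,
      ← mul_assoc, ← mul_assoc, ← mul_pow]
    simp
  simp only [Function.comp_apply, Equiv.subLeft_apply]
  rw [show (K : ℤ) - -(k + 1) = K + k + 1 by ring, mul_add, ← mul_assoc, ← mul_assoc, hsign, hsign']
  ring

theorem IsCoeffFamily.summable_sq (h : IsCoeffFamily α t D μ g) (K : ℕ) :
    Summable fun k => g K k ^ 2 := by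
  refine .of_nonneg_of_le (fun _ => sq_nonneg _) (fun k => ?_)
    (((summable_sq_besselPair α K).add (h.summable_sq_sub K)).mul_left 2)
  nlinarith [sq_nonneg (2 * besselPair α K k - g K k)]

theorem IsCoeffFamily.summable_pairing (h : IsCoeffFamily α t D μ g)
    (h' : IsCoeffFamily α (-t) D' μ' g') (K : ℕ) :
    Summable fun k => (-1) ^ k * (g K k * g' K k) := by
  refine .of_norm_bounded (((h.summable_sq K).add (h'.summable_sq K)).div_const 2) fun k => ?_
  rw [norm_mul, norm_pow, norm_neg, norm_one, one_pow, one_mul, norm_mul, norm_eq_abs,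
    norm_eq_abs]
  nlinarith [two_mul_le_add_sq |g K k| |g' K k|, sq_abs (g K k), sq_abs (g' K k)]

theorem summable_sq_mul_besselCoeff_tail (α : ℝ) (K : ℕ) :
    Summable fun k : ℕ => (((K + k + 1 : ℤ) : ℝ) * besselCoeff α (K + k + 1)) ^ 2 :=
  (summable_sq_mul_besselCoeff α).comp_injective (i := fun k : ℕ => (K + k + 1 : ℤ))
    fun _ _ h => by simpa using h

theorem tsum_sq_mul_besselCoeff_tail_le (α : ℝ) (K : ℕ) :
    ∑' k : ℕ, (((K + k + 1 : ℤ) : ℝ) * besselCoeff α (K + k + 1)) ^ 2 ≤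
      ∑' j : ℤ, (j * besselCoeff α j) ^ 2 :=
  tsum_comp_le_tsum_of_inj (summable_sq_mul_besselCoeff α) (fun _ => sq_nonneg _)
    (i := fun k : ℕ => (K + k + 1 : ℤ)) fun _ _ h => by simpa using h

theorem abs_mul_sub_sq_add_le {p b c d d' N : ℝ} (hN : 1 ≤ N) (hb : (N * b) ^ 2 ≤ 4 * c ^ 2) :
    |(p + d) * (p + d') - p ^ 2 + 2 * b * p| ≤
      (2 * p ^ 2 + 4 * c ^ 2) / N + N * (d ^ 2 + d' ^ 2) := by
  have hN0 : 0 < N := zero_lt_one.trans_le hN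
  have hNsq : N * (d ^ 2 + d' ^ 2) ≤ N ^ 2 * (d ^ 2 + d' ^ 2) := by
    gcongr
    exact le_self_pow₀ hN two_ne_zero
  rw [← sub_le_iff_le_add, le_div_iff₀ hN0, abs_eq_max_neg, ← max_sub_sub_right,
    max_mul_of_nonneg _ _ hN0.le]
  refine max_le ?_ ?_
  · nlinarith [sq_nonneg (p - N * d), sq_nonneg (p - N * d'), sq_nonneg (p - N * b),
      mul_nonneg hN0.le (sq_nonneg (d - d'))]
  · nlinarith [sq_nonneg (p + N * d), sq_nonneg (p + N * d'), sq_nonneg (p + N * b),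
      mul_nonneg hN0.le (sq_nonneg (d + d'))]

theorem IsCoeffFamily.exists_abs_pairing_sub_le (h : IsCoeffFamily α t D μ g)
    (h' : IsCoeffFamily α (-t) D' μ' g') :
    ∃ E, ∀ K : ℕ, |(∑' k, (-1) ^ k * (g K k * g' K k)) - (-1) ^ K| ≤ E / (2 * K + 1) := by
  refine ⟨4 * exp |α| ^ 2 + 4 * ∑' j : ℤ, (j * besselCoeff α j) ^ 2 + D ^ 2 + D' ^ 2, fun K => ?_⟩
  set p := besselPair α K
  set b : ℕ → ℝ := fun k => besselCoeff α (K + k + 1)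
  set N : ℝ := 2 * K + 1 with hN
  have hN1 : 1 ≤ N := by rw [hN]; linarith [K.cast_nonneg (α := ℝ)]
  have hparseval := hasSum_neg_one_pow_mul_sq_sub_sq_besselCoeff α K
  have hremainder : ∀ k, ‖(-1) ^ k * (g K k * g' K k) -
      (-1) ^ k * (besselCoeff α (K - k) ^ 2 - b k ^ 2)‖ ≤
      (2 * p k ^ 2 + 4 * (((K + k + 1 : ℤ) : ℝ) * b k) ^ 2) / N +
        N * ((g K k - p k) ^ 2 + (g' K k - p k) ^ 2) := by
    intro k
    have hindex : (N * b k) ^ 2 ≤ 4 * (((K + k + 1 : ℤ) : ℝ) * b k) ^ 2 := by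
      rw [mul_pow, mul_pow, ← mul_assoc, hN]
      gcongr
      push_cast
      nlinarith [K.cast_nonneg (α := ℝ), k.cast_nonneg (α := ℝ)]
    have hbound := abs_mul_sub_sq_add_le (p := p k) (d := g K k - p k) (d' := g' K k - p k)
      hN1 hindex
    have ha : besselCoeff α (K - k) = p k - b k := (add_sub_cancel_right _ _).symm
    rw [← mul_sub, norm_mul, norm_pow, norm_neg, norm_one, one_pow, one_mul, norm_eq_abs, ha]
    convert hbound using 2
    ring
  have hmajorant := ((((summable_sq_besselPair α K).hasSum.mul_left 2).add
    ((summable_sq_mul_besselCoeff_tail α K).hasSum.mul_left 4)).div_const N).add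
    (((h.summable_sq_sub K).hasSum.add (h'.summable_sq_sub K).hasSum).mul_left N)
  have hdiff := tsum_of_norm_bounded hmajorant hremainder
  rw [(h.summable_pairing h' K).tsum_sub hparseval.summable, hparseval.tsum_eq] at hdiff
  refine hdiff.trans ?_
  grw [tsum_sq_besselPair_le, tsum_sq_mul_besselCoeff_tail_le, h.tsum_sq_sub_le,
    h'.tsum_sq_sub_le, ← hN]
  refine le_of_eq ?_
  field_simp
  ring

theorem eq_zero_of_tendsto_of_abs_le_mul_summable {a b : ℕ → ℝ} {C L : ℝ} (ha : Summable a)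
    (hb : ∀ n, |b n| ≤ C * (n + 1) * a n) (hL : Tendsto b atTop (𝓝 L)) : L = 0 := by
  by_contra hL0
  have hlarge : ∀ᶠ n in atTop, |L| / 2 < |b n| :=
    hL.abs.eventually (lt_mem_nhds (half_lt_self (abs_pos.mpr hL0)))
  refine Real.not_summable_one_div_natCast ((summable_nat_add_iff 1).mp
    (summable_of_isBigO_nat ha (.of_bound (2 * |C| / |L|) ?_)))
  filter_upwards [hlarge] with n hn
  rw [norm_of_nonneg (by positivity), norm_eq_abs, mul_comm, ← mul_div_assoc,
    div_le_div_iff₀ (by positivity) (abs_pos.mpr hL0)]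
  push_cast
  have hprod : C * (n + 1) * a n ≤ |C| * (n + 1) * |a n| := by
    rw [mul_right_comm, mul_right_comm |C|, ← abs_mul]
    gcongr
    exact le_abs_self _
  linarith [hb n]

theorem IsCoeffFamily.sub_mul_sum_range (h : IsCoeffFamily α t D μ g)
    (h' : IsCoeffFamily α (-t) D' μ' g') (K n : ℕ) :
    (μ K - μ' K) * ∑ k ∈ Finset.range (n + 1), (-1) ^ k * (g K k * g' K k) =
      -(4 * α * t * (g K 0 * g' K 0)) + (-1) ^ n * (2 * α *
        ((2 * n + 2 - t) * (g K n * g' K (n + 1)) - (2 * n + 2 + t) * (g' K n * g K (n + 1)))) := by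
  induction n with
  | zero =>
    simp only [zero_add, Finset.sum_range_one, pow_zero, Nat.cast_zero, mul_zero]
    linear_combination -g' K 0 * h.rec_zero K + g K 0 * h'.rec_zero K
  | succ n ih =>
    rw [Finset.sum_range_succ, mul_add, ih]
    push_cast
    rw [pow_succ]
    linear_combination ((-1) ^ n * g' K (n + 1)) * h.rec_succ K n -
      (-1) ^ n * g K (n + 1) * h'.rec_succ K n

theorem abs_boundary_term_le (n : ℕ) (u v u' v' : ℝ) :
    |(-1) ^ n * (2 * α * ((2 * n + 2 - t) * (u * v') - (2 * n + 2 + t) * (u' * v)))| ≤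
      |α| * (2 + |t|) * (n + 1) * (u ^ 2 + v' ^ 2 + u' ^ 2 + v ^ 2) := by
  have hfactor : ∀ s : ℝ, |s| = |t| → |2 * n + 2 + s| ≤ (2 + |t|) * (n + 1) := fun s hs => by
    have hn : |t| ≤ |t| * (n + 1) := le_mul_of_one_le_right (abs_nonneg t) (by simp)
    grw [abs_add_le, hs, abs_of_nonneg (by positivity)]
    linarith
  have hyoung : ∀ a b : ℝ, |a * b| ≤ (a ^ 2 + b ^ 2) / 2 := fun a b => by
    have := sq_nonneg (|a| - |b|)
    rw [abs_mul]
    linarith [sq_abs a, sq_abs b]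
  have hminus := hfactor (-t) (abs_neg t)
  rw [← sub_eq_add_neg] at hminus
  rw [abs_mul, abs_pow, abs_neg, abs_one, one_pow, one_mul, abs_mul, abs_mul, abs_two]
  grw [abs_sub, abs_mul, abs_mul (2 * n + 2 + t : ℝ), hminus, hfactor t rfl, hyoung, hyoung]
  exact le_of_eq (by ring)

theorem IsCoeffFamily.sub_mul_tsum (h : IsCoeffFamily α t D μ g)
    (h' : IsCoeffFamily α (-t) D' μ' g') (K : ℕ) :
    (μ K - μ' K) * ∑' k, (-1) ^ k * (g K k * g' K k) = -(4 * α * t * (g K 0 * g' K 0)) := by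
  have hlim := ((h.summable_pairing h' K).hasSum.tendsto_sum_nat.comp
    (tendsto_add_atTop_nat 1)).const_mul (μ K - μ' K)
  have hboundary := (hlim.congr fun n => h.sub_mul_sum_range h' K n).add_const
    (4 * α * t * (g K 0 * g' K 0))
  simp only [neg_add_cancel_comm] at hboundary
  have hshift := fun {f : ℕ → ℝ} (hf : Summable f) => (summable_nat_add_iff 1).mpr hf
  have hzero := eq_zero_of_tendsto_of_abs_le_mul_summable
    ((((h.summable_sq K).add (hshift (h'.summable_sq K))).add (h'.summable_sq K)).add
      (hshift (h.summable_sq K))) (fun n => abs_boundary_term_le n _ _ _ _) hboundary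
  linarith

end Pairing

/-! ### Asymptotic equivalence with a rate -/

open Asymptotics Filter Topology

section EquivalentRate

/-- `u K = v K * (1 + O(r K))` as `K → ∞`; the difference form also covers the indices at which
`v` vanishes. -/
def IsEquivalentRate (r u v : ℕ → ℝ) : Prop :=
  (u - v) =O[atTop] (r * v)

variable {r s u v w u' v' : ℕ → ℝ}

namespace IsEquivalentRate

theorem of_eventuallyEq (h : u =ᶠ[atTop] v) : IsEquivalentRate r u v :=
  (h.sub .rfl).trans_isBigO (by simpa only [sub_self] using! isBigO_zero (r * v) atTop)

protected theorem refl (r u : ℕ → ℝ) : IsEquivalentRate r u u :=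
  of_eventuallyEq .rfl

theorem mono (h : IsEquivalentRate r u v) (hrs : r =O[atTop] s) : IsEquivalentRate s u v :=
  h.trans (hrs.mul (isBigO_refl v atTop))

theorem abs (h : IsEquivalentRate r u v) : IsEquivalentRate r |u| |v| := by
  have hright : (r * v) =O[atTop] (r * |v|) :=
    (isBigO_refl r atTop).mul (isBigO_refl v atTop).abs_right
  exact (IsBigO.of_norm_le fun K => abs_abs_sub_abs_le (u K) (v K)).trans
    ((isBigO_norm_left.mpr h).trans hright)

theorem isEquivalent (h : IsEquivalentRate r u v) (hr : Tendsto r atTop (𝓝 0)) :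
    u ~[atTop] v := by
  refine IsBigO.trans_isLittleO h ?_
  simpa only [one_mul] using! ((isLittleO_one_iff ℝ).mpr hr).mul_isBigO (isBigO_refl v atTop)

theorem symm (h : IsEquivalentRate r u v) (hr : Tendsto r atTop (𝓝 0)) :
    IsEquivalentRate r v u :=
  IsBigO.symm (IsBigO.trans h ((isBigO_refl r atTop).mul (h.isEquivalent hr).isBigO_symm))

theorem trans (h : IsEquivalentRate r u v) (h' : IsEquivalentRate r v w)
    (hr : Tendsto r atTop (𝓝 0)) : IsEquivalentRate r u w := by
  have hv := IsBigO.trans h ((isBigO_refl r atTop).mul (h'.isEquivalent hr).isBigO)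
  rw [IsEquivalentRate, ← sub_add_sub_cancel u v w]
  exact hv.add h'

theorem mul (h : IsEquivalentRate r u v) (h' : IsEquivalentRate r u' v')
    (hr : Tendsto r atTop (𝓝 0)) : IsEquivalentRate r (u * u') (v * v') := by
  have hleft := (IsBigO.mul h (h'.isEquivalent hr).isBigO).congr_right fun K => mul_assoc _ _ _
  have hright := ((isBigO_refl v atTop).mul h').congr_right fun K =>
    show v K * (r K * v' K) = r K * (v K * v' K) by ring
  refine (hleft.add hright).congr_left fun K => ?_
  simp only [Pi.sub_apply, Pi.mul_apply]
  ring

end IsEquivalentRate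

theorem isEquivalentRate_const {a : ℝ} (ha : a ≠ 0) (h : (fun K => u K - a) =O[atTop] r) :
    IsEquivalentRate r u fun _ => a :=
  h.trans ((isBigO_self_const_mul ha r atTop).congr_right fun K => mul_comm a (r K))

theorem isBigO_prod_one_add_sub_one {x : ℕ → ℕ → ℝ} (hr : Tendsto r atTop (𝓝 0))
    (h : (fun K => ∑ i ∈ Finset.range K, |x K i|) =O[atTop] r) :
    (fun K => ∏ i ∈ Finset.range K, (1 + x K i) - 1) =O[atTop] r := by
  have hexp : (fun y => exp y - 1) =O[𝓝 0] fun y => y := by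
    simpa using (hasDerivAt_exp 0).isBigO_sub
  refine (IsBigO.of_norm_le fun K => ?_).trans ((hexp.comp_tendsto (h.trans_tendsto hr)).trans h)
  exact Finset.norm_prod_one_add_sub_one_le (Finset.range K) (x K)

end EquivalentRate

/-- The relative error `log m / m` of the theorem, at `m = K + 1`. -/
def logRate (K : ℕ) : ℝ :=
  log (K + 1) / (K + 1)

theorem tendsto_logRate : Tendsto logRate atTop (𝓝 0) := by
  have h := (isLittleO_log_id_atTop.tendsto_div_nhds_zero.comp tendsto_natCast_atTop_atTop).comp
    (tendsto_add_atTop_nat 1)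
  exact h.congr fun K => by simp [logRate]

theorem isBigO_one_add_log_div_logRate :
    (fun K : ℕ => (1 + log K) / (K + 1)) =O[atTop] logRate := by
  refine IsBigO.of_bound 3 ((eventually_ge_atTop 1).mono fun K hK => ?_)
  have hK' : (1 : ℝ) ≤ K := by exact_mod_cast hK
  have hlog : log 2 ≤ log (K + 1) := log_le_log two_pos (by linarith)
  have hlogK : log K ≤ log (K + 1) := log_le_log (by linarith) (by linarith)
  have hlog0 : 0 ≤ log K := log_nonneg hK'
  have hlog1 : 0 ≤ log (K + 1) := hlog0.trans hlogK
  rw [logRate, norm_of_nonneg (by positivity), norm_of_nonneg (by positivity), ← mul_div_assoc]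
  gcongr
  linarith [log_two_gt_d9]

theorem isBigO_one_div_logRate : (fun K : ℕ => 1 / (K + 1 : ℝ)) =O[atTop] logRate := by
  refine (IsBigO.of_norm_le fun K => ?_).trans isBigO_one_add_log_div_logRate
  have : 0 ≤ log (K : ℝ) := log_natCast_nonneg K
  rw [norm_of_nonneg (by positivity)]
  gcongr
  linarith

theorem sum_range_one_div_add_one_le (n : ℕ) :
    ∑ j ∈ Finset.range n, 1 / (j + 1 : ℝ) ≤ 1 + log n := by
  simpa [harmonic] using harmonic_le_one_add_log n

theorem sum_range_one_div_mul_le (n : ℕ) :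
    ∑ j ∈ Finset.range n, 1 / ((j + 1 : ℝ) * (j + 2)) ≤ 1 := by
  have hsum : ∑ j ∈ Finset.range n, 1 / ((j + 1 : ℝ) * (j + 2)) = 1 - 1 / (n + 1) := by
    induction n with
    | zero => simp
    | succ n ih =>
      rw [Finset.sum_range_succ, ih]
      push_cast
      field_simp
      ring
  rw [hsum, sub_le_self_iff]
  positivity

theorem abs_le_of_second_order_recurrence (e x : ℕ → ℝ) (n : ℕ) :
    |e (n + 1)| ≤ (max |e 0| |e 1| +
      ∑ k ∈ Finset.range n, |e (k + 2) - e (k + 1) - x k * e k|) *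
        exp (∑ k ∈ Finset.range n, |x k|) := by
  have hgronwall := discrete_gronwall (n₀ := 0) (u := fun k => max |e k| |e (k + 1)|)
    (b := fun k => |e (k + 2) - e (k + 1) - x k * e k|) (c := fun k => |x k|) (by positivity)
    (fun k _ => ?_) (fun _ _ => abs_nonneg _) (fun _ _ => abs_nonneg _) n.zero_le
  · rw [← Finset.range_eq_Ico] at hgronwall
    exact (le_max_right _ _).trans hgronwall
  · have hk := le_max_left |e k| |e (k + 1)|
    have hk' := le_max_right |e k| |e (k + 1)|
    have hx : |x k| * |e k| ≤ |x k| * max |e k| |e (k + 1)| := by gcongr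
    have hstep : |e (k + 2)| ≤ |e (k + 2) - e (k + 1) - x k * e k| + |x k| * |e k| +
        |e (k + 1)| := by
      calc |e (k + 2)| = |e (k + 2) - e (k + 1) - x k * e k + x k * e k + e (k + 1)| := by ring_nf
        _ ≤ _ := by grw [abs_add_le, abs_add_le, abs_mul]
    refine max_le ?_ ?_ <;> nlinarith [abs_nonneg (e (k + 2) - e (k + 1) - x k * e k),
      abs_nonneg (x k), abs_nonneg (e k)]

/-! ### The recurrence below the diagonal -/

section Recurrence

variable {α t D μ : ℝ}

/-- The diagonal entry of the coefficient recurrence. -/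
def diagEntry (μ : ℝ) (k : ℕ) : ℝ :=
  (2 * k + 1) ^ 2 - μ

/-- The coefficient of `normCoeff α t μ k` in the recurrence for `normCoeff α t μ (k + 2)`. -/
def normStep (α t μ : ℝ) (k : ℕ) : ℝ :=
  2 * α * (2 * k + (2 - t)) / diagEntry μ k *
    (2 * α * (2 * (k + 1 : ℕ) + t) / diagEntry μ (k + 1))

/-- A solution `g` of the coefficient recurrence, rescaled by
`∏ i < k, 2 * α * (2 * (i + 1) + t) / diagEntry μ i` and normalized to start at `1`. -/
def normCoeff (α t μ : ℝ) : ℕ → ℝ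
  | 0 => 1
  | 1 => 1 - 2 * α * t / diagEntry μ 0
  | k + 2 => normCoeff α t μ (k + 1) + normStep α t μ k * normCoeff α t μ k

theorem diagEntry_eq {K k i : ℕ} (hK : k + i = K) :
    diagEntry μ k = -(4 * i * (2 * K + 1 - i) + (μ - (2 * K + 1) ^ 2)) := by
  have hk : (k : ℝ) = K - i := by rw [← hK]; push_cast; ring
  rw [diagEntry, hk]
  ring

theorem le_neg_diagEntry {K k i : ℕ} (hμ : |μ - (2 * K + 1) ^ 2| ≤ D) (hD : D ≤ K + 1)
    (hK : k + i = K) (hi : 1 ≤ i) : 3 * i * (K + 1) ≤ -diagEntry μ k := by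
  have hi' : (1 : ℝ) ≤ i := by exact_mod_cast hi
  have hiK : (i : ℝ) ≤ K := by exact_mod_cast (by omega : i ≤ K)
  rw [diagEntry_eq hK]
  nlinarith [(abs_le.mp hμ).1]

theorem diagEntry_neg {K k : ℕ} (hμ : |μ - (2 * K + 1) ^ 2| ≤ D) (hD : D ≤ K + 1) (hk : k < K) :
    diagEntry μ k < 0 := by
  obtain ⟨i, rfl⟩ := Nat.exists_eq_add_of_lt hk
  have := le_neg_diagEntry hμ hD (add_assoc k i 1).symm (by omega)
  have : (0 : ℝ) < 3 * (i + 1 : ℕ) * ((k + i + 1 : ℕ) + 1) := by positivity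
  linarith

theorem abs_div_diagEntry_add_le {K k i : ℕ} (hμ : |μ - (2 * K + 1) ^ 2| ≤ D) (hD : D ≤ K + 1)
    (hK : k + i = K) (hi : 1 ≤ i) (s : ℝ) :
    |2 * α * (2 * k + s) / diagEntry μ k + α / (2 * i)| ≤
      |α| * (4 + 4 * |s - 1| + D) / (K + 1) := by
  have hi' : (1 : ℝ) ≤ i := by exact_mod_cast hi
  have hD0 : 0 ≤ D := (abs_nonneg _).trans hμ
  have hdiag := le_neg_diagEntry hμ hD hK hi
  have hneg : diagEntry μ k < 0 := diagEntry_neg hμ hD (by omega)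
  set ρ := μ - (2 * K + 1) ^ 2
  have hk : (k : ℝ) = K - i := by rw [← hK]; push_cast; ring
  have hnum : |4 * i ^ 2 - 4 * i * (s - 1) + ρ| ≤ i ^ 2 * (4 + 4 * |s - 1| + D) := by
    have hlinear : 4 * i * |s - 1| ≤ i ^ 2 * (4 * |s - 1|) := by
      nlinarith [abs_nonneg (s - 1), mul_nonneg (sub_nonneg.2 hi') (abs_nonneg (s - 1))]
    have hconst : D ≤ i ^ 2 * D := le_mul_of_one_le_left hD0 (one_le_pow₀ hi')
    grw [abs_add_le, abs_sub, hμ, abs_of_nonneg (by positivity), abs_mul,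
      abs_of_nonneg (by positivity : (0 : ℝ) ≤ 4 * i), hlinear]
    linarith
  have hsplit : 2 * α * (2 * k + s) / diagEntry μ k + α / (2 * i) =
      α * (4 * i ^ 2 - 4 * i * (s - 1) + ρ) / (2 * i * -diagEntry μ k) := by
    have hdiag_eq : diagEntry μ k = -(4 * i * (2 * K + 1 - i) + ρ) := diagEntry_eq hK
    rw [div_add_div _ _ hneg.ne (by positivity),
      div_eq_div_iff (mul_ne_zero hneg.ne (by positivity)) (by nlinarith), hk]
    linear_combination (-2 * i * α * diagEntry μ k) * hdiag_eq
  have hden : i ^ 2 * (K + 1 : ℝ) ≤ 2 * i * -diagEntry μ k := by nlinarith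
  rw [hsplit, abs_div, abs_mul, abs_of_pos (by nlinarith : 0 < 2 * i * -diagEntry μ k)]
  calc _ ≤ |α| * (i ^ 2 * (4 + 4 * |s - 1| + D)) / (i ^ 2 * (K + 1)) := by gcongr
    _ = _ := by field_simp

theorem abs_normStep_sub_le {K k j : ℕ} (hμ : |μ - (2 * K + 1) ^ 2| ≤ D) (hD : D ≤ K + 1)
    (hK : k + j + 2 = K) {E : ℝ} (hE : E = |α| * (4 + 4 * |t - 1| + D)) :
    |normStep α t μ k - α ^ 2 / 4 / ((j + 1) * (j + 2))| ≤
      (|α| * E + E ^ 2) / (K + 1) * (1 / (j + 1)) := by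
  have hleft := abs_div_diagEntry_add_le (α := α) hμ hD (i := j + 2) (by omega) (by omega) (2 - t)
  have hright := abs_div_diagEntry_add_le (α := α) hμ hD (k := k + 1) (i := j + 1) (by omega)
    (by omega) t
  rw [show 2 - t - 1 = -(t - 1) by ring, abs_neg, ← hE] at hleft
  rw [← hE] at hright
  have hE0 : 0 ≤ E := by
    rw [hE]
    have := (abs_nonneg _).trans hμ
    positivity
  push_cast at hleft hright
  set p := α / (2 * (j + 2 : ℝ)) with hp
  set q := α / (2 * (j + 1 : ℝ)) with hq
  set δ := 2 * α * (2 * k + (2 - t)) / diagEntry μ k + p with hδ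
  set δ' := 2 * α * (2 * (k + 1) + t) / diagEntry μ (k + 1) + q with hδ'
  have hsub : normStep α t μ k - α ^ 2 / 4 / ((j + 1) * (j + 2)) = δ * δ' - p * δ' - δ * q := by
    rw [normStep, hδ, hδ', hp, hq]
    push_cast
    field_simp
    ring
  have habs : ∀ m : ℝ, j + 1 ≤ m → |α / (2 * m)| ≤ |α| / (2 * (j + 1)) := fun m hm => by
    have : (0 : ℝ) < m := by linarith [(j.cast_nonneg : (0 : ℝ) ≤ j)]
    rw [abs_div, abs_of_pos (by positivity : 0 < 2 * m)]
    gcongr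
  have hδδ' : |δ| * |δ'| ≤ E / (K + 1) * (E / (j + 1)) := by
    have : (j : ℝ) ≤ K := by exact_mod_cast (by omega : j ≤ K)
    exact mul_le_mul hleft (hright.trans (by gcongr)) (abs_nonneg _) (by positivity)
  rw [hsub]
  grw [abs_sub, abs_sub, abs_mul, abs_mul, abs_mul, hδδ', habs (j + 2) (by linarith),
    habs (j + 1) le_rfl, hleft, hright]
  refine le_of_eq ?_
  field_simp
  ring

theorem normStep_mul_diagEntry {k : ℕ} (hk : diagEntry μ k ≠ 0) (hk' : diagEntry μ (k + 1) ≠ 0) :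
    normStep α t μ k * (diagEntry μ k * diagEntry μ (k + 1)) =
      2 * α * (2 * k + (2 - t)) * (2 * α * (2 * (k + 1 : ℕ) + t)) := by
  rw [normStep]
  field_simp

theorem IsCoeffFamily.mul_prod_eq {μ : ℕ → ℝ} {g : ℕ → ℕ → ℝ} (h : IsCoeffFamily α t D μ g) {K : ℕ}
    (hne : ∀ k < K, diagEntry (μ K) k ≠ 0) :
    g K K * ∏ i ∈ Finset.range K, 2 * α * (2 * (i + 1) + t) =
      g K 0 * normCoeff α t (μ K) K * ∏ i ∈ Finset.range K, diagEntry (μ K) i := by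
  set P : ℕ → ℝ := fun k => ∏ i ∈ Finset.range k, 2 * α * (2 * (i + 1) + t) with hP
  set Q : ℕ → ℝ := fun k => ∏ i ∈ Finset.range k, diagEntry (μ K) i with hQ
  suffices hk : ∀ k ≤ K, g K k * P k = g K 0 * normCoeff α t (μ K) k * Q k from hk K le_rfl
  intro k
  induction k using Nat.twoStepInduction with
  | zero => simp [hP, hQ, normCoeff]
  | one =>
    intro hK
    have h0 := hne 0 hK
    have hrec := h.rec_zero K
    simp only [hP, hQ, normCoeff, Finset.prod_range_one]
    field_simp
    rw [diagEntry]
    push_cast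
    linear_combination -hrec
  | more k ih ih' =>
    intro hK
    have hrec := h.rec_succ K k
    have hdiag : diagEntry (μ K) (k + 1) = (2 * (k + 1 : ℝ) + 1) ^ 2 - μ K := by
      simp [diagEntry]
    have hstep := normStep_mul_diagEntry (α := α) (t := t) (hne k (by omega)) (hne (k + 1) hK)
    have hP1 : P (k + 1) = P k * (2 * α * (2 * (k + 1) + t)) := Finset.prod_range_succ _ _
    have hP2 : P (k + 2) = P (k + 1) * (2 * α * (2 * ((k + 1 : ℕ) + 1) + t)) :=
      Finset.prod_range_succ _ _
    have hQ1 : Q (k + 1) = Q k * diagEntry (μ K) k := Finset.prod_range_succ _ _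
    have hQ2 : Q (k + 2) = Q (k + 1) * diagEntry (μ K) (k + 1) := Finset.prod_range_succ _ _
    push_cast at hstep hP2
    rw [← hdiag] at hrec
    change g K (k + 2) * P (k + 2) = g K 0 * (normCoeff α t (μ K) (k + 1) +
      normStep α t (μ K) k * normCoeff α t (μ K) k) * Q (k + 2)
    rw [hP2, hQ2]
    linear_combination (-P (k + 1)) * hrec + diagEntry (μ K) (k + 1) * ih' (by omega) +
      2 * α * (2 * (k + 1) - t) * (2 * α * (2 * (k + 1) + t)) * ih (by omega) +
      2 * α * (2 * (k + 1) - t) * g K k * hP1 -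
      g K 0 * normCoeff α t (μ K) k * normStep α t (μ K) k * diagEntry (μ K) (k + 1) * hQ1 -
      g K 0 * normCoeff α t (μ K) k * Q k * hstep

end Recurrence

section Limit

variable {α t D μ M : ℝ} {n : ℕ}

theorem sum_abs_normStep_le (hM : 0 ≤ M) (hstep : ∀ k j, k + j + 1 = n →
      |normStep α t μ k - α ^ 2 / 4 / ((j + 1) * (j + 2))| ≤ M / (n + 2) * (1 / (j + 1))) :
    ∑ k ∈ Finset.range n, |normStep α t μ k| ≤ α ^ 2 / 4 + M := by
  have hterm : ∀ k ∈ Finset.range n, |normStep α t μ k| ≤ α ^ 2 / 4 *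
      (1 / (((n - 1 - k : ℕ) + 1) * ((n - 1 - k : ℕ) + 2))) + M / (n + 2) := fun k hk => by
    have hj : k + (n - 1 - k) + 1 = n := by have := Finset.mem_range.1 hk; omega
    have hstep_k := hstep k _ hj
    set j := n - 1 - k
    have hM_le : M / (n + 2) * (1 / (j + 1)) ≤ M / (n + 2) :=
      mul_le_of_le_one_right (by positivity) (by rw [div_le_one₀] <;> norm_cast <;> omega)
    have htri := abs_sub_abs_le_abs_sub (normStep α t μ k) (α ^ 2 / 4 / ((j + 1) * (j + 2)))
    rw [abs_of_nonneg (by positivity : 0 ≤ α ^ 2 / 4 / ((j + 1) * (j + 2))),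
      div_eq_mul_one_div (α ^ 2 / 4)] at htri
    rw [div_eq_mul_one_div (α ^ 2 / 4)] at hstep_k
    linarith
  grw [Finset.sum_le_sum hterm]
  rw [Finset.sum_add_distrib, ← Finset.mul_sum, Finset.sum_const, Finset.card_range, nsmul_eq_mul,
    Finset.sum_range_reflect (fun j : ℕ => 1 / ((j + 1 : ℝ) * (j + 2)))]
  grw [sum_range_one_div_mul_le, mul_one]
  gcongr
  rw [mul_div_assoc', div_le_iff₀ (by positivity)]
  nlinarith

theorem sum_abs_residual_le (hM : 0 ≤ M) (hstep : ∀ k j, k + j + 1 = n →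
      |normStep α t μ k - α ^ 2 / 4 / ((j + 1) * (j + 2))| ≤ M / (n + 2) * (1 / (j + 1)))
    {e : ℕ → ℝ} (he : ∀ k, e k = normCoeff α t μ k - besselSeries (α ^ 2 / 4) (n + 1 - k)) :
    ∑ k ∈ Finset.range n, |e (k + 2) - e (k + 1) - normStep α t μ k * e k| ≤
      M * (1 + exp (α ^ 2 / 4)) * ((1 + log n) / (n + 2)) := by
  have hβ : 0 ≤ α ^ 2 / 4 := by positivity
  have hterm : ∀ k ∈ Finset.range n, |e (k + 2) - e (k + 1) - normStep α t μ k * e k| ≤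
      M * (1 + exp (α ^ 2 / 4)) / (n + 2) * (1 / ((n - 1 - k : ℕ) + 1)) := fun k hk => by
    have hj : k + (n - 1 - k) + 1 = n := by have := Finset.mem_range.1 hk; omega
    set j := n - 1 - k
    have hresidual : e (k + 2) - e (k + 1) - normStep α t μ k * e k =
        (normStep α t μ k - α ^ 2 / 4 / ((j + 1) * (j + 2))) *
          besselSeries (α ^ 2 / 4) (j + 2) := by
      rw [he, he, he, normCoeff, show n + 1 - (k + 2) = j by omega,
        show n + 1 - (k + 1) = j + 1 by omega, show n + 1 - k = j + 2 by omega,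
        besselSeries_eq_add hβ j]
      ring
    have hseries : |besselSeries (α ^ 2 / 4) (j + 2)| ≤ 1 + exp (α ^ 2 / 4) := by
      rw [abs_of_pos (zero_lt_one.trans_le (one_le_besselSeries hβ _))]
      grw [besselSeries_le hβ]
      gcongr
      refine div_le_self (exp_pos _).le ?_
      norm_cast
      omega
    rw [hresidual, abs_mul]
    grw [hstep k j hj, hseries]
    exact le_of_eq (by ring)
  grw [Finset.sum_le_sum hterm]
  rw [← Finset.mul_sum, Finset.sum_range_reflect (fun j : ℕ => 1 / (j + 1 : ℝ))]
  grw [sum_range_one_div_add_one_le]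
  exact le_of_eq (by ring)

theorem abs_one_sub_besselSeries_le {β : ℝ} (hβ : 0 ≤ β) (j : ℕ) :
    |1 - besselSeries β j| ≤ exp β / (j + 1) := by
  rw [abs_sub_comm, abs_of_nonneg (sub_nonneg.2 (one_le_besselSeries hβ j))]
  linarith [besselSeries_le hβ j]

theorem abs_normCoeff_one_sub_le (hμ : |μ - (2 * (n + 1 : ℕ) + 1) ^ 2| ≤ D)
    (hD : D ≤ (n + 1 : ℕ) + 1) :
    |normCoeff α t μ 1 - besselSeries (α ^ 2 / 4) n| ≤
      2 * (|α * t| + exp (α ^ 2 / 4)) * (1 / (n + 2)) := by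
  have hβ : 0 ≤ α ^ 2 / 4 := by positivity
  have hdiag := le_neg_diagEntry hμ hD (k := 0) (i := n + 1) (by omega) (by omega)
  push_cast at hdiag
  have hdiv : |2 * α * t / diagEntry μ 0| ≤ 2 * |α * t| * (1 / (n + 2)) := by
    have hle : (n : ℝ) + 2 ≤ -diagEntry μ 0 := by nlinarith
    rw [mul_assoc, abs_div, abs_mul, abs_two, ← abs_neg (diagEntry μ 0), ← div_eq_mul_one_div]
    gcongr
    exact hle.trans (le_abs_self _)
  have hseries : |1 - besselSeries (α ^ 2 / 4) n| ≤ 2 * exp (α ^ 2 / 4) * (1 / (n + 2)) := by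
    refine (abs_one_sub_besselSeries_le hβ n).trans ?_
    rw [mul_one_div, div_le_div_iff₀ (by positivity) (by positivity)]
    nlinarith [mul_nonneg (exp_pos (α ^ 2 / 4)).le (n.cast_nonneg : (0 : ℝ) ≤ n)]
  rw [normCoeff, sub_right_comm]
  grw [abs_sub, hseries, hdiv]
  exact le_of_eq (by ring)

theorem exists_abs_normCoeff_sub_le (α t D : ℝ) : ∃ C, ∀ (n : ℕ) (μ : ℝ),
    |μ - (2 * (n + 1 : ℕ) + 1) ^ 2| ≤ D → D ≤ (n + 1 : ℕ) + 1 →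
      |normCoeff α t μ (n + 1) - besselSeries (α ^ 2 / 4) 0| ≤ C * ((1 + log n) / (n + 2)) := by
  have hβ : 0 ≤ α ^ 2 / 4 := by positivity
  set M := |α| * (|α| * (4 + 4 * |t - 1| + D)) + (|α| * (4 + 4 * |t - 1| + D)) ^ 2
  refine ⟨(2 * (|α * t| + exp (α ^ 2 / 4)) + M * (1 + exp (α ^ 2 / 4))) *
    exp (α ^ 2 / 4 + M), fun n μ hμ hD => ?_⟩
  have hM0 : 0 ≤ M := by
    have := (abs_nonneg _).trans hμ
    positivity
  have hstep : ∀ k j, k + j + 1 = n →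
      |normStep α t μ k - α ^ 2 / 4 / ((j + 1) * (j + 2))| ≤ M / (n + 2) * (1 / (j + 1)) :=
    fun k j hj => by
      convert abs_normStep_sub_le hμ hD (by omega : k + j + 2 = n + 1) rfl using 3
      push_cast
      ring
  have hlog : 0 ≤ log (n : ℝ) := log_natCast_nonneg n
  set e : ℕ → ℝ := fun k => normCoeff α t μ k - besselSeries (α ^ 2 / 4) (n + 1 - k) with he
  have hzero : |e 0| ≤ 2 * (|α * t| + exp (α ^ 2 / 4)) * (1 / (n + 2)) := by
    refine (abs_one_sub_besselSeries_le hβ (n + 1)).trans ?_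
    have hpos : 0 ≤ (2 * |α * t| + exp (α ^ 2 / 4)) * (1 / (n + 2)) := by positivity
    calc _ = exp (α ^ 2 / 4) * (1 / (n + 2)) := by push_cast; ring
      _ ≤ _ := by linarith
  have hinit : max |e 0| |e 1| ≤
      2 * (|α * t| + exp (α ^ 2 / 4)) * ((1 + log n) / (n + 2)) := by
    refine (max_le hzero (abs_normCoeff_one_sub_le hμ hD)).trans ?_
    gcongr
    linarith
  have hbound := abs_le_of_second_order_recurrence e (normStep α t μ) n
  grw [hinit, sum_abs_residual_le hM0 hstep (fun _ => rfl), sum_abs_normStep_le hM0 hstep]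
    at hbound
  simp only [he, Nat.sub_self] at hbound
  exact hbound.trans_eq (by ring)

theorem isBigO_normCoeff_sub {μ : ℕ → ℝ} (hμ : ∀ K : ℕ, |μ K - (2 * K + 1) ^ 2| ≤ D) :
    (fun K => normCoeff α t (μ K) K - besselSeries (α ^ 2 / 4) 0) =O[atTop] logRate := by
  obtain ⟨C, hC⟩ := exists_abs_normCoeff_sub_le α t D
  refine IsBigO.trans (IsBigO.of_bound |C| ?_) isBigO_one_add_log_div_logRate
  filter_upwards [eventually_ge_atTop (⌈D⌉₊ + 1)] with K hK
  obtain ⟨n, rfl⟩ : ∃ n, K = n + 1 := ⟨K - 1, by omega⟩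
  have hD : D ≤ (n + 1 : ℕ) + 1 := (Nat.le_ceil D).trans (by exact_mod_cast (by omega))
  have hlog : log (n : ℝ) ≤ log (n + 1 : ℕ) := by
    rcases n.eq_zero_or_pos with rfl | hn
    · simp
    · exact log_le_log (by exact_mod_cast hn) (by simp)
  have hcast : ((n + 1 : ℕ) + 1 : ℝ) = n + 2 := by push_cast; ring
  rw [norm_of_nonneg (by positivity : 0 ≤ (1 + log (n + 1 : ℕ)) / ((n + 1 : ℕ) + 1 : ℝ)), hcast]
  refine (hC n _ (hμ _) hD).trans ?_
  grw [le_abs_self C, hlog]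

theorem prod_range_sub_mul_add_eq_factorial (K : ℕ) :
    ∏ k ∈ Finset.range K, ((K - k : ℝ) * (K + k + 1)) = (2 * K).factorial := by
  have hterm : ∀ k ∈ Finset.range K, (K - k : ℝ) * (K + k + 1) =
      ((K - k : ℕ) * (K + 1 + k : ℕ) : ℕ) := fun k hk => by
    rw [Nat.cast_mul, Nat.cast_sub (Finset.mem_range.1 hk).le]
    push_cast
    ring
  rw [Finset.prod_congr rfl hterm, ← Nat.cast_prod, Finset.prod_mul_distrib,
    ← Nat.descFactorial_eq_prod_range, ← Nat.ascFactorial_eq_prod_range, Nat.descFactorial_self,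
    Nat.factorial_mul_ascFactorial, two_mul]

theorem prod_diagEntry_eq (μ : ℝ) (K : ℕ) : ∏ k ∈ Finset.range K, diagEntry μ k =
    (-1) ^ K * (4 ^ K * (2 * K).factorial) *
      ∏ k ∈ Finset.range K, (1 + (μ - (2 * K + 1) ^ 2) / (4 * ((K - k) * (K + k + 1)))) := by
  rw [← prod_range_sub_mul_add_eq_factorial, ← mul_assoc, ← mul_pow, neg_one_mul,
    Finset.pow_eq_prod_const, ← Finset.prod_mul_distrib, ← Finset.prod_mul_distrib]
  refine Finset.prod_congr rfl fun k hk => ?_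
  have hk : (k : ℝ) < K := by exact_mod_cast Finset.mem_range.1 hk
  have hsub : (K - k : ℝ) ≠ 0 := by linarith
  rw [diagEntry]
  field_simp
  ring

theorem sum_abs_div_le (D : ℝ) {ρ : ℝ} (hρ : |ρ| ≤ D) (K : ℕ) :
    ∑ k ∈ Finset.range K, |ρ / (4 * ((K - k) * (K + k + 1)))| ≤
      D * ((1 + log K) / (K + 1)) := by
  have hD : 0 ≤ D := (abs_nonneg ρ).trans hρ
  have hterm : ∀ k ∈ Finset.range K, |ρ / (4 * ((K - k) * (K + k + 1)))| ≤
      D / (K + 1) * (1 / ((K - 1 - k : ℕ) + 1)) := fun k hk => by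
    obtain ⟨i, rfl⟩ := Nat.exists_eq_add_of_lt (Finset.mem_range.1 hk)
    have hi : k + i + 1 - 1 - k = i := by omega
    have hden : ((k + i + 1 : ℕ) + 1 : ℝ) * (i + 1) ≤
        4 * (((k + i + 1 : ℕ) - k) * ((k + i + 1 : ℕ) + k + 1)) := by
      push_cast
      nlinarith [mul_nonneg (k.cast_nonneg : (0 : ℝ) ≤ k) (i.cast_nonneg : (0 : ℝ) ≤ i),
        (k.cast_nonneg : (0 : ℝ) ≤ k), (i.cast_nonneg : (0 : ℝ) ≤ i)]
    have hden_pos : (0 : ℝ) < ((k + i + 1 : ℕ) + 1 : ℝ) * (i + 1) := by positivity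
    rw [hi, abs_div, abs_of_pos (hden_pos.trans_le hden), div_mul_div_comm, mul_one]
    gcongr
  grw [Finset.sum_le_sum hterm]
  rw [← Finset.mul_sum, Finset.sum_range_reflect (fun j : ℕ => 1 / (j + 1 : ℝ))]
  grw [sum_range_one_div_add_one_le]
  exact le_of_eq (by ring)

theorem isEquivalentRate_prod_diagEntry {μ : ℕ → ℝ} (hμ : ∀ K : ℕ, |μ K - (2 * K + 1) ^ 2| ≤ D) :
    IsEquivalentRate logRate (fun K => ∏ k ∈ Finset.range K, diagEntry (μ K) k)
      fun K => (-1) ^ K * (4 ^ K * (2 * K).factorial) := by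
  have hsum : (fun K : ℕ => ∑ k ∈ Finset.range K,
      |(μ K - (2 * K + 1) ^ 2) / (4 * ((K - k) * (K + k + 1)))|) =O[atTop] logRate := by
    refine (IsBigO.of_bound D (Eventually.of_forall fun K => ?_)).trans
      isBigO_one_add_log_div_logRate
    rw [norm_of_nonneg (Finset.sum_nonneg fun _ _ => abs_nonneg _), norm_of_nonneg (by positivity)]
    exact sum_abs_div_le D (hμ K) K
  have hone := isEquivalentRate_const one_ne_zero
    (isBigO_prod_one_add_sub_one tendsto_logRate hsum)
  convert (IsEquivalentRate.refl logRate
    fun K => (-1 : ℝ) ^ K * (4 ^ K * (2 * K).factorial)).mul hone tendsto_logRate using 1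
  · exact funext fun K => prod_diagEntry_eq (μ K) K
  · exact funext fun K => (mul_one _).symm

end Limit

section LeadingTerm

variable {α t D : ℝ} {μ : ℕ → ℝ} {g : ℕ → ℕ → ℝ}

theorem exists_abs_besselCoeff_le (α : ℝ) :
    ∃ C, ∀ j : ℕ, |besselCoeff α (2 * j + 1)| ≤ C / (2 * j + 1) := by
  refine ⟨√(∑' j : ℤ, (j * besselCoeff α j) ^ 2), fun j => ?_⟩
  rw [le_div_iff₀ (by positivity), mul_comm]
  refine (le_abs_self _).trans (abs_le_sqrt ?_)
  have hterm := (summable_sq_mul_besselCoeff α).le_tsum (2 * j + 1) fun _ _ => sq_nonneg _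
  rw [mul_pow, sq_abs, ← mul_pow]
  exact_mod_cast hterm

theorem IsCoeffFamily.isBigO_diag_sub (h : IsCoeffFamily α t D μ g) :
    (fun K => g K K - besselCoeff α 0) =O[atTop] fun K => 1 / (K + 1 : ℝ) := by
  obtain ⟨C, hC⟩ := exists_abs_besselCoeff_le α
  refine IsBigO.of_bound (|D| + |C|) (Eventually.of_forall fun K => ?_)
  have hpair : |g K K - besselPair α K K| ≤ |D| / (2 * K + 1) := by
    rw [← abs_of_pos (by positivity : (0 : ℝ) < 2 * K + 1), ← abs_div]
    exact sq_le_sq.mp (((h.summable_sq_sub K).le_tsum K fun _ _ => sq_nonneg _).trans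
      (h.tsum_sq_sub_le K))
  have hsplit : g K K - besselCoeff α 0 =
      g K K - besselPair α K K + besselCoeff α (2 * K + 1) := by
    rw [besselPair, sub_self, two_mul]
    ring
  rw [hsplit, norm_eq_abs, norm_of_nonneg (by positivity)]
  grw [abs_add_le, hpair, hC K, le_abs_self C, ← add_div, ← div_eq_mul_one_div]
  gcongr
  linarith [K.cast_nonneg (α := ℝ)]

theorem IsCoeffFamily.isEquivalentRate_zero (h : IsCoeffFamily α t D μ g) :
    IsEquivalentRate logRate (fun K => g K 0 * ((-1) ^ K * (4 ^ K * (2 * K).factorial)))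
      fun K => ∏ i ∈ Finset.range K, 2 * α * (2 * (i + 1) + t) := by
  set b := besselCoeff α 0 with hb
  have hb0 : b ≠ 0 := (besselCoeff_zero_pos α).ne'
  set A : ℕ → ℝ := fun K => ∏ i ∈ Finset.range K, 2 * α * (2 * (i + 1) + t)
  have hr := tendsto_logRate
  have hdiag : IsEquivalentRate logRate (fun K => g K K) fun _ => b :=
    isEquivalentRate_const hb0 (h.isBigO_diag_sub.trans isBigO_one_div_logRate)
  have hnorm : IsEquivalentRate logRate (fun K => normCoeff α t (μ K) K) fun _ => b :=
    isEquivalentRate_const hb0 <| by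
      rw [hb, besselCoeff_zero]
      exact isBigO_normCoeff_sub h.abs_sub_le
  have hprod := isEquivalentRate_prod_diagEntry h.abs_sub_le
  have hidentity : (fun K => g K 0 * normCoeff α t (μ K) K *
      ∏ k ∈ Finset.range K, diagEntry (μ K) k) =ᶠ[atTop] fun K => g K K * A K := by
    filter_upwards [eventually_ge_atTop ⌈D⌉₊] with K hK
    have hD : D ≤ K + 1 := (Nat.ceil_le.mp hK).trans (by simp)
    exact (h.mul_prod_eq fun k hk => (diagEntry_neg (h.abs_sub_le K) hD hk).ne).symm
  have hleft := (((IsEquivalentRate.refl logRate fun K => g K 0).mul hnorm hr).mul hprod hr).symm hr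
  have hright := hdiag.mul (.refl logRate A) hr
  have hscaled := (hleft.trans (.of_eventuallyEq hidentity) hr).trans hright hr
  convert (IsEquivalentRate.refl logRate fun _ => b⁻¹).mul hscaled hr using 1 <;>
  · funext K
    simp only [Pi.mul_apply]
    field_simp

theorem abs_sin_sub_prod_le (τ : ℝ) {K : ℕ} (hK : K ≠ 0) :
    |sin (π * τ) - π * τ * ∏ i ∈ Finset.range K, (1 - τ ^ 2 / ((i : ℝ) + 1) ^ 2)| ≤
      |π * τ * ∏ i ∈ Finset.range K, (1 - τ ^ 2 / ((i : ℝ) + 1) ^ 2)| *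
        (exp (τ ^ 2 * (K : ℝ)⁻¹) - 1) := by
  refine le_of_tendsto ((tendsto_euler_sin_prod τ).sub_const _).abs ?_
  filter_upwards [eventually_ge_atTop K] with N hKN
  have hsum : ∑ i ∈ Finset.Ico K N, ‖-(τ ^ 2 / ((i : ℝ) + 1) ^ 2)‖ ≤ τ ^ 2 * (K : ℝ)⁻¹ := by
    have hshift : ∑ i ∈ Finset.Ico K N, (((i + 1 : ℕ) : ℝ) ^ 2)⁻¹ ≤ (K : ℝ)⁻¹ := by
      rw [Finset.sum_Ico_add' (fun i : ℕ => ((i : ℝ) ^ 2)⁻¹),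
        Finset.Ico_add_one_add_one_eq_Ioc]
      refine (sum_Ioc_inv_sq_le_sub hK hKN).trans (sub_le_self _ (by positivity))
    grw [← hshift, Finset.mul_sum]
    refine Finset.sum_le_sum fun i _ => ?_
    rw [norm_neg, norm_of_nonneg (by positivity), div_eq_mul_inv, Nat.cast_add_one]
  have htail := Finset.norm_prod_one_add_sub_one_le (Finset.Ico K N)
    fun i : ℕ => -(τ ^ 2 / ((i : ℝ) + 1) ^ 2)
  rw [norm_eq_abs] at htail
  simp only [← sub_eq_add_neg] at htail
  rw [← Finset.prod_range_mul_prod_Ico _ hKN, ← mul_assoc, ← mul_sub_one, abs_mul]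
  grw [htail, hsum]

theorem isEquivalentRate_sin (τ : ℝ) : IsEquivalentRate logRate
    (fun K => π * τ * ∏ i ∈ Finset.range K, (1 - τ ^ 2 / ((i : ℝ) + 1) ^ 2))
      fun _ => sin (π * τ) := by
  refine IsEquivalentRate.symm (IsEquivalentRate.mono (r := fun K => 1 / (K + 1 : ℝ)) ?_
    isBigO_one_div_logRate) tendsto_logRate
  refine IsBigO.of_bound (2 * τ ^ 2 * exp (τ ^ 2)) ?_
  filter_upwards [eventually_ge_atTop 1] with K hK
  have hK' : (1 : ℝ) ≤ K := by exact_mod_cast hK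
  have hexp : exp (τ ^ 2 * (K : ℝ)⁻¹) - 1 ≤ 2 * τ ^ 2 * exp (τ ^ 2) * (1 / (K + 1)) := by
    have hinv : (K : ℝ)⁻¹ ≤ 2 * (1 / (K + 1)) := by
      rw [mul_one_div, inv_eq_one_div, div_le_div_iff₀ (by positivity) (by positivity)]
      linarith
    have hle : τ ^ 2 * (K : ℝ)⁻¹ ≤ τ ^ 2 :=
      mul_le_of_le_one_right (sq_nonneg τ) (inv_le_one_of_one_le₀ hK')
    calc exp (τ ^ 2 * (K : ℝ)⁻¹) - 1 ≤ τ ^ 2 * (K : ℝ)⁻¹ * exp (τ ^ 2 * (K : ℝ)⁻¹) := by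
          grw [le_abs_self (exp _ - 1), abs_exp_sub_one_le_mul_exp_abs,
            abs_of_nonneg (by positivity)]
      _ ≤ τ ^ 2 * (2 * (1 / (K + 1))) * exp (τ ^ 2) := by gcongr
      _ = _ := by ring
  simp only [Pi.sub_apply, Pi.mul_apply, norm_eq_abs]
  refine (abs_sin_sub_prod_le τ (by omega)).trans ?_
  grw [hexp]
  rw [abs_mul (1 / (K + 1 : ℝ)), abs_of_nonneg (by positivity : (0 : ℝ) ≤ 1 / (K + 1))]
  exact le_of_eq (by ring)

end LeadingTerm

/-! ### The band gaps -/

section Gap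

variable {α t D D' : ℝ} {μ μ' : ℕ → ℝ} {g g' : ℕ → ℕ → ℝ}

theorem prod_mul_prod_neg_eq (α t : ℝ) (K : ℕ) :
    (∏ i ∈ Finset.range K, 2 * α * (2 * (i + 1) + t)) *
        ∏ i ∈ Finset.range K, 2 * α * (2 * (i + 1) + -t) =
      16 ^ K * α ^ (2 * K) * (K.factorial : ℝ) ^ 2 *
        ∏ i ∈ Finset.range K, (1 - (t / 2) ^ 2 / ((i : ℝ) + 1) ^ 2) := by
  have hpow : 16 ^ K * α ^ (2 * K) = ∏ _i ∈ Finset.range K, 16 * α ^ 2 := by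
    rw [pow_mul, ← mul_pow, Finset.prod_const, Finset.card_range]
  rw [hpow, ← Finset.prod_range_add_one_eq_factorial, Nat.cast_prod, ← Finset.prod_pow,
    ← Finset.prod_mul_distrib, ← Finset.prod_mul_distrib, ← Finset.prod_mul_distrib]
  refine Finset.prod_congr rfl fun i _ => ?_
  push_cast
  field_simp
  ring

theorem IsCoeffFamily.isEquivalentRate_pairing (h : IsCoeffFamily α t D μ g)
    (h' : IsCoeffFamily α (-t) D' μ' g') :
    IsEquivalentRate logRate (fun K => ∑' k, (-1) ^ k * (g K k * g' K k)) fun K => (-1) ^ K := by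
  obtain ⟨E, hE⟩ := h.exists_abs_pairing_sub_le h'
  refine IsEquivalentRate.mono (IsBigO.of_bound |E| (.of_forall fun K => ?_))
    isBigO_one_div_logRate
  simp only [Pi.sub_apply, Pi.mul_apply, norm_mul, norm_pow, norm_neg, norm_one, one_pow, mul_one]
  rw [norm_eq_abs, norm_of_nonneg (by positivity), ← div_eq_mul_one_div]
  grw [hE K, le_abs_self E]
  gcongr
  linarith [K.cast_nonneg (α := ℝ)]

/-- The leading asymptotics of the length of the gap number `2 * K + 1` of `potential α t`, without
the factor `|sin (π * t / 2)|`. -/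
def gapLeadingTerm (α : ℝ) (K : ℕ) : ℝ :=
  8 * α ^ (2 * K + 1) * K.factorial ^ 2 / (2 * K).factorial ^ 2 / π

theorem gapLeadingTerm_nonneg (hα : 0 ≤ α) (K : ℕ) : 0 ≤ gapLeadingTerm α K := by
  unfold gapLeadingTerm
  positivity

theorem IsCoeffFamily.isEquivalentRate_sub (h : IsCoeffFamily α t D μ g)
    (h' : IsCoeffFamily α (-t) D' μ' g') :
    IsEquivalentRate logRate (fun K => μ K - μ' K)
      fun K => -(-1) ^ K * gapLeadingTerm α K * sin (π * (t / 2)) := by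
  have hr := tendsto_logRate
  set S : ℕ → ℝ := fun K => ∑' k, (-1) ^ k * (g K k * g' K k)
  set P : ℕ → ℝ := fun K => ∏ i ∈ Finset.range K, (1 - (t / 2) ^ 2 / ((i : ℝ) + 1) ^ 2)
  have hsign : ∀ K : ℕ, ((-1 : ℝ) ^ K) * (-1) ^ K = 1 := fun K => by simp [← mul_pow]
  have hprod : ∀ K, _ = 16 ^ K * α ^ (2 * K) * (K.factorial : ℝ) ^ 2 * P K :=
    prod_mul_prod_neg_eq α t
  have hpairing : IsEquivalentRate logRate (fun K => μ K - μ' K)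
      fun K => (-1) ^ K * (μ K - μ' K) * S K := by
    have hmul := (IsEquivalentRate.refl logRate fun K => (-1) ^ K * (μ K - μ' K)).mul
      (h.isEquivalentRate_pairing h') hr
    refine (IsEquivalentRate.of_eventuallyEq (.of_forall fun K => ?_)).trans (hmul.symm hr) hr
    exact ((mul_right_comm _ _ _).trans (by rw [hsign, one_mul])).symm
  have hboundary : IsEquivalentRate logRate (fun K => (-1) ^ K * (μ K - μ' K) * S K)
      fun K => -(-1) ^ K * gapLeadingTerm α K * (π * (t / 2) * P K) := by
    have hmul := (IsEquivalentRate.refl logRate fun K : ℕ =>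
      -(4 * α * t) * (-1) ^ K / (16 ^ K * (2 * K).factorial ^ 2)).mul
      (h.isEquivalentRate_zero.mul h'.isEquivalentRate_zero hr) hr
    convert hmul using 1 <;> funext K <;> simp only [Pi.mul_apply]
    · have h16 : (16 : ℝ) ^ K = 4 ^ K * 4 ^ K := by rw [← mul_pow]; norm_num
      rw [mul_assoc, h.sub_mul_tsum h', mul_mul_mul_comm (g K 0), mul_mul_mul_comm ((-1) ^ K),
        hsign, h16]
      field_simp
    · rw [hprod, gapLeadingTerm]
      field_simp
      ring
  exact (hpairing.trans hboundary hr).trans ((IsEquivalentRate.refl logRate fun K =>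
    -(-1) ^ K * gapLeadingTerm α K).mul (isEquivalentRate_sin (t / 2)) hr) hr

theorem isEquivalentRate_semiGap (hα : 0 ≤ α) {lamM : ℕ → ℝ}
    (hlam : EnumSemi (potential α t) lamM) :
    IsEquivalentRate logRate (fun K => lamM (2 * K + 2) - lamM (2 * K + 1))
      fun K => gapLeadingTerm α K * |sin (π * (t / 2))| := by
  obtain ⟨e, y, C, he⟩ := exists_isMixedSpectrum (continuous_potential α t) (abs_potential_le α t)
  obtain ⟨o, z, C', ho⟩ :=
    exists_isMixedSpectrum (continuous_potential α (-t)) (abs_potential_le α (-t))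
  obtain ⟨K₀, hgap⟩ := exists_forall_semiGap_eq_abs_sub (continuous_potential α t)
    (abs_potential_le α t) (potential_neg α t) (potential_add_pi α t) hlam he
    (by simpa only [potential_add_pi_div_two] using ho)
  obtain ⟨D, h⟩ := he.exists_isCoeffFamily
  obtain ⟨D', h'⟩ := ho.exists_isCoeffFamily
  refine (IsEquivalentRate.of_eventuallyEq ?_).trans
    ((h.isEquivalentRate_sub h').abs.trans (.of_eventuallyEq (.of_forall fun K => ?_))
      tendsto_logRate) tendsto_logRate
  · filter_upwards [eventually_ge_atTop K₀] with K hK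
    rw [hgap K hK, Pi.abs_apply, add_sub_add_right_eq_sub]
  · rw [Pi.abs_apply, abs_mul, abs_mul, abs_neg, abs_pow, abs_neg, abs_one, one_pow, one_mul,
      abs_of_nonneg (gapLeadingTerm_nonneg hα K)]

theorem gapLeadingTerm_mul_sqrt_div_two (x : ℝ) {c : ℝ} (hc : c ≤ 0) {K : ℕ} (hK : K ≠ 0) :
    gapLeadingTerm (x * (√(-2 * c) / 2)) K = x ^ (2 * K + 1) * |c| ^ K * √(-2 * c) /
      (2 ^ (3 * (K + 1) - 5) * ((2 * (K + 1) - 3).doubleFactorial : ℝ) ^ 2 * π) := by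
  obtain ⟨L, rfl⟩ := Nat.exists_eq_succ_of_ne_zero hK
  set s := √(-2 * c)
  have hc_abs : |c| = s ^ 2 / 2 := by
    rw [abs_of_nonpos hc, sq_sqrt (by linarith)]
    ring
  have hfactorial : ((2 * (L + 1)).factorial : ℝ) =
      2 ^ (L + 1) * (L + 1).factorial * (2 * L + 1).doubleFactorial := by
    rw [show 2 * (L + 1) = 2 * L + 1 + 1 by ring, Nat.factorial_eq_mul_doubleFactorial,
      show 2 * L + 1 + 1 = 2 * (L + 1) by ring, Nat.doubleFactorial_two_mul]
    push_cast
    rfl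
  have hdouble : ((2 * L + 1).doubleFactorial : ℝ) ≠ 0 :=
    Nat.cast_ne_zero.mpr (Nat.doubleFactorial_pos _).ne'
  rw [gapLeadingTerm, Nat.succ_eq_add_one, hfactorial, hc_abs,
    show 2 * (L + 1 + 1) - 3 = 2 * L + 1 by omega, show 3 * (L + 1 + 1) - 5 = 3 * L + 1 by omega]
  simp only [mul_pow, div_pow, pow_add, pow_mul, pow_one]
  field_simp
  rw [pow_succ 2 2, mul_pow]
  ring

theorem eq_potential (b m1 : ℝ) {c q : ℝ} (hc : c < 0) (hq : 0 ≤ q) :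
    (fun x => b * q ^ m1 * cos (2 * x) + c * q ^ (2 * m1) * cos (4 * x)) =
      potential (q ^ m1 * (√(-2 * c) / 2)) (-b / (2 * √(-2 * c))) := by
  have hsq : √(-2 * c) ^ 2 = -2 * c := sq_sqrt (by linarith)
  have hs : √(-2 * c) ≠ 0 := (sqrt_pos.mpr (by linarith)).ne'
  have hq2 : q ^ (2 * m1) = (q ^ m1) ^ 2 := by
    rw [mul_comm, rpow_mul hq, rpow_two]
  have hcos2 : -(4 * (q ^ m1 * (√(-2 * c) / 2)) * (-b / (2 * √(-2 * c)))) = b * q ^ m1 := by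
    generalize √(-2 * c) = s at hs
    field_simp
    ring
  funext x
  rw [potential, hcos2, mul_pow, div_pow, hsq, hq2]
  ring

theorem gapLeadingTerm_mul_abs_sin (b m1 : ℝ) {c q : ℝ} (hc : c ≤ 0) (hq : 0 ≤ q) {K : ℕ}
    (hK : K ≠ 0) :
    gapLeadingTerm (q ^ m1 * (√(-2 * c) / 2)) K * |sin (π * (-b / (2 * √(-2 * c)) / 2))| =
      q ^ (m1 * (2 * ((K + 1 : ℕ) : ℝ) - 1)) * |c| ^ (K + 1 - 1) * √(-2 * c) /
          (2 ^ (3 * (K + 1) - 5) * ((2 * (K + 1) - 3).doubleFactorial : ℝ) ^ 2 * π) *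
        |sin (b * π / (4 * √(-2 * c)))| := by
  have hpow : q ^ (m1 * (2 * ((K + 1 : ℕ) : ℝ) - 1)) = (q ^ m1) ^ (2 * K + 1) := by
    rw [rpow_mul hq, ← rpow_natCast]
    push_cast
    ring_nf
  have hangle : π * (-b / (2 * √(-2 * c)) / 2) = -(b * π / (4 * √(-2 * c))) := by ring
  rw [gapLeadingTerm_mul_sqrt_div_two _ hc hK, hpow, hangle, sin_neg, abs_neg,
    Nat.add_sub_cancel]

end Gap

end WhittakerHill

theorem stmt9 (b c m1 q : ℝ) (hc : c < 0) (hm1 : 0 < m1) (hq : 0 < q)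
    (lamP lamM : ℕ → ℝ)
    (hP : EnumPer (fun x => b * q ^ m1 * Real.cos (2 * x) + c * q ^ (2 * m1) * Real.cos (4 * x))
      lamP)
    (hM : EnumSemi (fun x => b * q ^ m1 * Real.cos (2 * x) + c * q ^ (2 * m1) * Real.cos (4 * x))
      lamM)
    (B : ℕ → ℝ)
    (hB : ∀ m : ℕ, 2 ≤ m →
      B m = q ^ (m1 * (2 * (m : ℝ) - 1)) * |c| ^ (m - 1) * Real.sqrt (-2 * c) /
          (2 ^ (3 * m - 5) * ((2 * m - 3).doubleFactorial : ℝ) ^ 2 * Real.pi) *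
        |Real.sin (b * Real.pi / (4 * Real.sqrt (-2 * c)))|) :
    ∃ C > 0, ∃ M : ℕ, 0 < M ∧ ∀ m : ℕ, M ≤ m →
      |gapLen lamP lamM (2 * m - 1) - B m| ≤ C * B m * Real.log m / m := by
  rw [WhittakerHill.eq_potential b m1 hc hq.le] at hM
  obtain ⟨C, hC, hbound⟩ := (WhittakerHill.isEquivalentRate_semiGap (by positivity) hM).exists_pos
  obtain ⟨K₀, hK₀⟩ := Filter.eventually_atTop.mp hbound.bound
  refine ⟨C, hC, K₀ + 2, by omega, fun m hm => ?_⟩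
  obtain ⟨K, rfl⟩ := Nat.exists_eq_add_of_le' (show 1 ≤ m by omega)
  have hgap : gapLen lamP lamM (2 * (K + 1) - 1) = lamM (2 * K + 2) - lamM (2 * K + 1) :=
    if_pos ⟨K, rfl⟩
  have hBK := hB (K + 1) (by omega)
  have hBnonneg : 0 ≤ B (K + 1) := by
    rw [hBK]
    positivity
  have hlog : 0 ≤ WhittakerHill.logRate K :=
    div_nonneg (log_nonneg (by simp)) (by positivity)
  have hK := hK₀ K (by omega)
  simp only [Pi.sub_apply, Pi.mul_apply,
    WhittakerHill.gapLeadingTerm_mul_abs_sin b m1 hc.le hq.le (show K ≠ 0 by omega)] at hK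
  rw [← hBK, ← hgap, norm_mul, norm_of_nonneg hlog, norm_of_nonneg hBnonneg, norm_eq_abs] at hK
  rw [WhittakerHill.logRate, ← Nat.cast_add_one] at hK
  exact hK.trans_eq (by ring)
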